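/- arXiv:1104.2716 — 7 statements merged into one kernel-verified Lean document; each statement's English description precedes it below -/
import Mathlib

section
/- Let A be an infinite set of positive integers and let m = {(k_1,m_1),...,(k_r,m_r)} be a configuration whose degree s = gcd(m_1,...,m_r) satisfies s ≥ 2. Then for every polynomial q with rational coefficients of degree at most s−2, it is not the case that r_m(n,A) = q(n) for all sufficiently large n. -/
/-- The representation function `r_m(n, A)` associated to the configuration
`{(k 0, m 0), ..., (k (r-1), m (r-1))}`: the number of tuples `(a i j)` with
all entries in `A` and `n = ∑ i, k i * (a i 0 + ... + a i (m i - 1))`. -/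
noncomputable def reprFn (A : Set ℕ) (r : ℕ) (k m : Fin r → ℕ) (n : ℕ) : ℕ :=
  Nat.card {a : (i : Fin r) → Fin (m i) → ℕ //
    (∀ i j, a i j ∈ A) ∧ n = ∑ i, k i * ∑ j, a i j}

open PowerSeries in
/-- Generating series of the dilate `c * A`. -/
noncomputable def dilSeries (A : Set ℕ) (c : ℕ) : PowerSeries ℕ := by
  classical
  exact PowerSeries.mk fun n => if ∃ a ∈ A, n = c * a then 1 else 0

theorem repr_aux (A : Set ℕ) (r : ℕ) (k m : Fin r → ℕ) (hk : ∀ i, 0 < k i) (n : ℕ) :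
    PowerSeries.coeff n (∏ i, dilSeries A (k i) ^ m i) = reprFn A r k m n ∧
    Finite {a : (i : Fin r) → Fin (m i) → ℕ //
      (∀ i j, a i j ∈ A) ∧ n = ∑ i, k i * ∑ j, a i j} := by
  classical
  let S := (Finset.finsuppAntidiag (Finset.univ : Finset (Σ i, Fin (m i))) n).filter
    (fun l => ∀ x, ∃ a ∈ A, l x = k x.1 * a)
  have h1 : PowerSeries.coeff n (∏ i, dilSeries A (k i) ^ m i) = S.card := by
    have : ∏ i, dilSeries A (k i) ^ m i = ∏ x : Σ i, Fin (m i), dilSeries A (k x.1) := by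
      rw [Fintype.prod_sigma]; simp
    rw [this, PowerSeries.coeff_prod]
    simp only [dilSeries, PowerSeries.coeff_mk, Finset.prod_ite_zero, Finset.prod_const_one, S,
      Finset.mem_univ, true_imp_iff]
    rw [Finset.card_filter]
  have hsum : ∀ a : (i : Fin r) → Fin (m i) → ℕ,
      ∑ x : Σ i, Fin (m i), k x.1 * a x.1 x.2 = ∑ i, k i * ∑ j, a i j := by
    intro a
    rw [Fintype.sum_sigma]; simp [Finset.mul_sum]
  let φ : {a : (i : Fin r) → Fin (m i) → ℕ //
      (∀ i j, a i j ∈ A) ∧ n = ∑ i, k i * ∑ j, a i j} → S := fun a =>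
    ⟨Finsupp.equivFunOnFinite.symm (fun x => k x.1 * a.1 x.1 x.2), by
      simp only [S, Finset.mem_filter, Finset.mem_finsuppAntidiag]
      refine ⟨⟨?_, Finset.subset_univ _⟩, fun x => ⟨_, a.2.1 x.1 x.2, by simp⟩⟩
      refine Eq.trans ?_ ((hsum a.1).trans a.2.2.symm)
      simp⟩
  have hφ : Function.Bijective φ := by
    constructor
    · intro a b hab
      apply Subtype.ext
      funext i j
      have := congrArg (fun z => (z : (Σ i, Fin (m i)) →₀ ℕ) ⟨i, j⟩) (congrArg Subtype.val hab)
      simpa [φ, (hk i).ne'] using this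
    · rintro ⟨l, hl⟩
      have hl' := hl
      simp only [S, Finset.mem_filter, Finset.mem_finsuppAntidiag] at hl'
      obtain ⟨⟨h1, -⟩, h2⟩ := hl'
      choose b hb hb2 using h2
      refine ⟨⟨fun i j => b ⟨i, j⟩, fun i j => hb _, ?_⟩, ?_⟩
      · rw [← hsum, ← h1]
        exact Finset.sum_congr rfl fun x _ => hb2 x
      · apply Subtype.ext
        ext x
        simp [φ, hb2]
  refine ⟨?_, Finite.of_injective φ hφ.1⟩
  rw [h1, reprFn, Nat.card_congr (Equiv.ofBijective φ hφ)]
  simp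

theorem rec_aux (u v g : ℕ → ℚ) (D : ℕ) (hu : ∀ a, D < a → u a = 0) (hv : ∀ a, D < a → v a = 0)
    (hu0 : ∃ a, u a ≠ 0)
    (h : ∀ N, ∑ p ∈ Finset.HasAntidiagonal.antidiagonal N, (u p.1 * p.2 - v p.1) * g p.2 = 0) :
    ∃ M0 : ℕ, ∀ m ≥ M0, (∀ b < m, m ≤ b + D → g b = 0) → g m = 0 := by
  classical
  have hex : ∃ a, u a ≠ 0 ∨ v a ≠ 0 := hu0.imp fun a => Or.inl
  let j := Nat.find hex
  have hj : u j ≠ 0 ∨ v j ≠ 0 := Nat.find_spec hex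
  have hmin : ∀ a < j, u a = 0 ∧ v a = 0 := fun a ha => by
    have := Nat.find_min hex ha
    tauto
  obtain ⟨M0, hM0⟩ := exists_nat_gt (v j / u j)
  refine ⟨M0, fun m hm hz => ?_⟩
  have hN := h (j + m)
  rw [Finset.sum_eq_single (j, m)] at hN
  · rcases mul_eq_zero.1 hN with h1 | h1
    · exfalso
      simp only at h1
      by_cases h0 : u j = 0
      · simp [h0] at h1 hj; contradiction
      · have : (m : ℚ) = v j / u j := by field_simp; linarith
        have h2 : (M0 : ℚ) ≤ m := by exact_mod_cast hm
        linarith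
    · exact h1
  · rintro ⟨a, b⟩ hab hne
    simp only [Finset.HasAntidiagonal.mem_antidiagonal] at hab
    simp only [ne_eq, Prod.mk.injEq, not_and] at hne
    simp only
    rcases lt_trichotomy a j with h1 | h1 | h1
    · simp [hmin a h1]
    · omega
    · by_cases hD : D < a
      · simp [hu a hD, hv a hD]
      · rw [hz b (by omega) (by omega), mul_zero]
  · simp

theorem diff_aux (e : ℕ) : ∀ (F : PowerSeries ℚ) (q : Polynomial ℚ), q.degree < e →
    (∃ N, ∀ n ≥ N, PowerSeries.coeff n F = q.eval (n : ℚ)) →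
    ∃ N, ∀ n ≥ N, PowerSeries.coeff n (F * (1 - PowerSeries.X) ^ e) = 0 := by
  induction e with
  | zero =>
    rintro F q hq ⟨N, hN⟩
    have : q = 0 := by
      rw [← Polynomial.degree_eq_bot]
      simpa [Nat.WithBot.lt_zero_iff] using hq
    exact ⟨N, fun n hn => by simp [hN n hn, this]⟩
  | succ e ih =>
    rintro F q hq ⟨N, hN⟩
    rw [pow_succ']
    simp only [← mul_assoc]
    apply ih (F * (1 - PowerSeries.X)) (q - Polynomial.taylor (-1) q)
    · by_cases h0 : q = 0
      · simp [h0]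
      · have := Polynomial.degree_sub_lt_left (p := q) (q := Polynomial.taylor (-1) q)
          (by simp) h0 (by simp)
        refine lt_of_lt_of_le this ?_
        exact Order.le_of_lt_succ (by
          rw [← Order.succ_eq_add_one] at hq
          exact_mod_cast hq)
    · refine ⟨N + 1, fun n hn => ?_⟩
      obtain ⟨n, rfl⟩ : ∃ t, n = t + 1 := ⟨n - 1, by omega⟩
      rw [mul_sub, mul_one, map_sub, PowerSeries.coeff_succ_mul_X, hN _ (by omega),
        hN _ (by omega), Polynomial.eval_sub, Polynomial.taylor_eval]
      simp

theorem mul_sum_aux (P Q : PowerSeries ℕ) (N M : ℕ) :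
    (∑ i ∈ Finset.range (N + 1), PowerSeries.coeff i P) *
    (∑ i ∈ Finset.range (M + 1), PowerSeries.coeff i Q) ≤
    ∑ i ∈ Finset.range (N + M + 1), PowerSeries.coeff i (P * Q) := by
  classical
  simp only [PowerSeries.coeff_mul]
  rw [Finset.sum_mul_sum, ← Finset.sum_product', Finset.sum_sigma']
  have hinj : Set.InjOn (fun p : ℕ × ℕ => (⟨p.1 + p.2, p⟩ : Σ _ : ℕ, ℕ × ℕ))
      (Finset.range (N + 1) ×ˢ Finset.range (M + 1) : Finset (ℕ × ℕ)) := by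
    intro p _ p' _ h
    simp only [Sigma.mk.injEq, heq_eq_eq] at h
    exact h.2
  rw [← Finset.sum_image (f := fun x : Σ _ : ℕ, ℕ × ℕ =>
    PowerSeries.coeff x.2.1 P * PowerSeries.coeff x.2.2 Q) hinj]
  refine Finset.sum_le_sum_of_subset ?_
  intro x hx
  obtain ⟨p, hp, rfl⟩ := Finset.mem_image.1 hx
  simp only [Finset.mem_product, Finset.mem_range] at hp
  simp only [Finset.mem_sigma, Finset.mem_range, Finset.HasAntidiagonal.mem_antidiagonal, and_true]
  omega

theorem pow_sum_aux (G : PowerSeries ℕ) (N s : ℕ) :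
    (∑ i ∈ Finset.range (N + 1), PowerSeries.coeff i G) ^ s ≤
    ∑ i ∈ Finset.range (s * N + 1), PowerSeries.coeff i (G ^ s) := by
  induction s with
  | zero => simp
  | succ s ih =>
    rw [pow_succ, pow_succ, add_mul, one_mul]
    exact (Nat.mul_le_mul_right _ ih).trans (mul_sum_aux _ _ _ _)

theorem blocks_aux (g : ℕ → ℕ) (N L : ℕ) (h : ∀ n ≥ N, ∃ b, n ≤ b ∧ b < n + L ∧ g b ≠ 0) (t : ℕ) :
    t ≤ ∑ i ∈ Finset.range (N + t * L), g i := by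
  induction t with
  | zero => simp
  | succ t ih =>
    obtain ⟨b, h1, h2, h3⟩ := h (N + t * L) (by omega)
    have : N + (t + 1) * L = N + t * L + L := by ring
    rw [this, Finset.range_eq_Ico, ← Finset.sum_Ico_consecutive g (Nat.zero_le (N + t * L)) (by omega),
      ← Finset.range_eq_Ico]
    have : g b ≤ ∑ i ∈ Finset.Ico (N + t * L) (N + t * L + L), g i :=
      Finset.single_le_sum (fun _ _ => Nat.zero_le _) (by simp; omega)
    omega

theorem poly_bound (q : Polynomial ℚ) (d : ℕ) (hq : q.degree ≤ d) (F : ℕ → ℕ) (N : ℕ)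
    (hF : ∀ n ≥ N, (F n : ℚ) = q.eval (n : ℚ)) :
    ∃ C : ℚ, ∀ n, (F n : ℚ) ≤ C * ((n : ℚ) + 1) ^ d := by
  have hnd : q.natDegree < d + 1 := Nat.lt_succ_of_le (Polynomial.natDegree_le_of_degree_le hq)
  have hA : 0 ≤ ∑ i ∈ Finset.range (d + 1), |q.coeff i| := Finset.sum_nonneg fun _ _ => abs_nonneg _
  have hB : (0 : ℚ) ≤ ∑ i ∈ Finset.range N, (F i : ℚ) := Finset.sum_nonneg fun _ _ => by positivity
  refine ⟨∑ i ∈ Finset.range (d + 1), |q.coeff i| + ∑ i ∈ Finset.range N, (F i : ℚ), fun n => ?_⟩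
  have h1 : (1 : ℚ) ≤ ((n : ℚ) + 1) ^ d := one_le_pow₀ (by linarith [(Nat.cast_nonneg n : (0:ℚ) ≤ n)])
  by_cases hn : N ≤ n
  · rw [hF n hn, Polynomial.eval_eq_sum_range' hnd, add_mul]
    have : ∑ i ∈ Finset.range (d + 1), q.coeff i * (n : ℚ) ^ i ≤
        (∑ i ∈ Finset.range (d + 1), |q.coeff i|) * ((n : ℚ) + 1) ^ d := by
      rw [Finset.sum_mul]
      refine Finset.sum_le_sum fun i hi => ?_
      have hi' : i ≤ d := by simpa [Nat.lt_succ_iff] using hi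
      have h2 : (n : ℚ) ^ i ≤ ((n : ℚ) + 1) ^ d :=
        (pow_le_pow_left₀ (by positivity) (by linarith) i).trans
          (pow_le_pow_right₀ (by linarith [(Nat.cast_nonneg n : (0:ℚ) ≤ n)]) hi')
      exact mul_le_mul (le_abs_self _) h2 (by positivity) (abs_nonneg _)
    nlinarith
  · have : (F n : ℚ) ≤ ∑ i ∈ Finset.range N, (F i : ℚ) :=
      Finset.single_le_sum (f := fun i => (F i : ℚ)) (fun _ _ => by positivity) (by simp; omega)
    nlinarith

/-- Core: a nonpolynomial series with natural coefficients cannot have `s`-th power with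
coefficients eventually polynomial of degree at most `s - 2`. -/
theorem core_aux (G : PowerSeries ℕ) (s : ℕ) (hs2 : 2 ≤ s) (q : Polynomial ℚ)
    (hq : q.degree ≤ (s - 2 : ℕ)) (N : ℕ)
    (hF : ∀ n ≥ N, ((PowerSeries.coeff n (G ^ s) : ℕ) : ℚ) = q.eval (n : ℚ)) :
    ∃ M, ∀ n ≥ M, PowerSeries.coeff n G = 0 := by
  classical
  by_cases hG0 : G = 0
  · exact ⟨0, by simp [hG0]⟩
  let Gq : PowerSeries ℚ := G.map (Nat.castRingHom ℚ)
  have hGc : ∀ n, PowerSeries.coeff n Gq = ((PowerSeries.coeff n G : ℕ) : ℚ) := fun n => by simp [Gq]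
  have hGq0 : Gq ≠ 0 := by
    intro h
    apply hG0
    ext n
    have := hGc n
    rw [h] at this
    simpa using this.symm
  have hFc : ∀ n, PowerSeries.coeff n (Gq ^ s) = ((PowerSeries.coeff n (G ^ s) : ℕ) : ℚ) := fun n => by
    simp [Gq, ← map_pow]
  obtain ⟨N1, hN1⟩ := diff_aux s (Gq ^ s) q (lt_of_le_of_lt hq (by
    exact_mod_cast (by omega : s - 2 < s))) ⟨N, fun n hn => by rw [hFc, hF n hn]⟩
  let R : Polynomial ℚ := PowerSeries.trunc N1 (Gq ^ s * (1 - PowerSeries.X) ^ s)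
  have hR : (R : PowerSeries ℚ) = Gq ^ s * (1 - PowerSeries.X) ^ s := by
    ext n
    rw [Polynomial.coeff_coe, PowerSeries.coeff_trunc]
    split_ifs with h
    · rfl
    · exact (hN1 n (by omega)).symm
  let E : Polynomial ℚ := (1 - Polynomial.X) ^ s
  have hE : (E : PowerSeries ℚ) = (1 - PowerSeries.X) ^ s := by simp [E]
  have h1X : (1 - PowerSeries.X : PowerSeries ℚ) ≠ 0 := by
    intro h
    have := congrArg (PowerSeries.coeff 0) h
    simp at this
  have hE0 : (E : PowerSeries ℚ) ≠ 0 := by rw [hE]; exact pow_ne_zero _ h1X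
  let U : Polynomial ℚ := Polynomial.C (s : ℚ) * E * R
  let V : Polynomial ℚ := Polynomial.X * (E * R.derivative - E.derivative * R)
  have hR0 : (R : PowerSeries ℚ) ≠ 0 := by
    rw [hR]; exact mul_ne_zero (pow_ne_zero _ hGq0) (pow_ne_zero _ h1X)
  have hU0 : U ≠ 0 := by
    have h1 : E ≠ 0 := fun h => hE0 (by simp [h])
    have h2 : R ≠ 0 := fun h => hR0 (by simp [h])
    refine mul_ne_zero (mul_ne_zero ?_ h1) h2
    simp; omega
  have hRE : (R : PowerSeries ℚ) = Gq ^ s * E := by rw [hR, hE]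
  have hode : (U : PowerSeries ℚ) * (PowerSeries.X * PowerSeries.derivative ℚ Gq) = (V : PowerSeries ℚ) * Gq := by
    have hd := congrArg (PowerSeries.derivative ℚ) hRE
    rw [Derivation.leibniz, PowerSeries.derivative_pow, PowerSeries.derivative_coe,
      PowerSeries.derivative_coe] at hd
    simp only [smul_eq_mul] at hd
    have hp : Gq ^ s = Gq ^ (s - 1) * Gq := by rw [← pow_succ]; congr 1; omega
    simp only [U, V, Polynomial.coe_mul, Polynomial.coe_sub, Polynomial.coe_X, Polynomial.coe_C]
    rw [hd, hRE, hp]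
    simp only [map_natCast]
    ring
  have hU0' : ∃ a, U.coeff a ≠ 0 := by
    by_contra! h
    exact hU0 (Polynomial.ext (by simpa using h))
  set D := max U.natDegree V.natDegree with hD
  obtain ⟨M0, hM0⟩ := rec_aux U.coeff V.coeff (fun n => ((PowerSeries.coeff n G : ℕ) : ℚ)) D
    (fun a ha => Polynomial.coeff_eq_zero_of_natDegree_lt (lt_of_le_of_lt (le_max_left _ _) ha))
    (fun a ha => Polynomial.coeff_eq_zero_of_natDegree_lt (lt_of_le_of_lt (le_max_right _ _) ha))
    hU0' (by
      intro n
      have hx : ∀ b, PowerSeries.coeff b (PowerSeries.X * PowerSeries.derivative ℚ Gq) =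
          b * ((PowerSeries.coeff b G : ℕ) : ℚ) := by
        intro b
        cases b with
        | zero => simp
        | succ b => rw [PowerSeries.coeff_succ_X_mul, PowerSeries.coeff_derivative, hGc]; push_cast; ring
      have := congrArg (PowerSeries.coeff n) hode
      rw [PowerSeries.coeff_mul, PowerSeries.coeff_mul] at this
      simp only [hx, hGc, Polynomial.coeff_coe] at this
      rw [← sub_eq_zero, ← Finset.sum_sub_distrib] at this
      rw [← this]
      exact Finset.sum_congr rfl fun p _ => by ring)
  have hM0' : ∀ m ≥ M0, (∀ b < m, m ≤ b + D → PowerSeries.coeff b G = 0) →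
      PowerSeries.coeff m G = 0 := by
    intro m hm h
    exact_mod_cast hM0 m hm (fun b hb hb' => by exact_mod_cast h b hb hb')
  -- either there is a gap or not
  by_cases hgap : ∃ n ≥ M0, ∀ b, n ≤ b → b < n + D → PowerSeries.coeff b G = 0
  · obtain ⟨n, hn, hz⟩ := hgap
    refine ⟨n, fun m => ?_⟩
    induction m using Nat.strong_induction_on with
    | _ m ih =>
      intro hm
      by_cases hmn : m < n + D
      · exact hz m hm hmn
      · exact hM0' m (by omega) fun b hb hb' => ih b hb (by omega)
  · exfalso
    push Not at hgap
    have hbl := blocks_aux (fun n => PowerSeries.coeff n G) M0 D hgap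
    obtain ⟨C, hC⟩ := poly_bound q (s - 2) hq (fun n => PowerSeries.coeff n (G ^ s)) N hF
    have hC0 : 0 ≤ C := by
      have := hC 0
      simp at this
      exact le_trans (by positivity) this
    set K := s * (M0 + D) + 1 with hK
    have key : ∀ t : ℕ, 1 ≤ t → (t : ℚ) ≤ C * (K : ℚ) ^ (s - 1) := by
      intro t ht
      have h1 : t ^ s ≤ ∑ i ∈ Finset.range (s * (M0 + t * D) + 1), PowerSeries.coeff i (G ^ s) := by
        refine le_trans (Nat.pow_le_pow_left ?_ s) (pow_sum_aux G (M0 + t * D) s)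
        refine (hbl t).trans (Finset.sum_le_sum_of_subset ?_)
        intro x; simp; omega
      have h3 : s * (M0 + t * D) + 1 ≤ K * t := by
        rw [hK]; nlinarith [Nat.zero_le (s * M0), Nat.mul_le_mul_left (s * M0) ht]
      have h4 : ((t : ℚ)) ^ s ≤ ∑ i ∈ Finset.range (K * t), ((PowerSeries.coeff i (G ^ s) : ℕ) : ℚ) := by
        exact_mod_cast h1.trans (Finset.sum_le_sum_of_subset (by
          intro x; simp only [Finset.mem_range]; omega))
      have h5 : ∑ i ∈ Finset.range (K * t), ((PowerSeries.coeff i (G ^ s) : ℕ) : ℚ) ≤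
          ∑ i ∈ Finset.range (K * t), C * ((K : ℚ) * t) ^ (s - 2) := by
        refine Finset.sum_le_sum fun i hi => (hC i).trans ?_
        refine mul_le_mul_of_nonneg_left (pow_le_pow_left₀ (by positivity) ?_ _) hC0
        have : i + 1 ≤ K * t := by simpa using hi
        exact_mod_cast this
      rw [Finset.sum_const, Finset.card_range, nsmul_eq_mul] at h5
      obtain ⟨w, rfl⟩ : ∃ w, s = w + 2 := ⟨s - 2, by omega⟩
      simp only [Nat.add_sub_cancel, show w + 2 - 1 = w + 1 by omega] at h5 ⊢
      have h6 : (t : ℚ) ^ (w + 1) * t ≤ (t : ℚ) ^ (w + 1) * (C * (K : ℚ) ^ (w + 1)) := by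
        calc (t : ℚ) ^ (w + 1) * t = (t : ℚ) ^ (w + 2) := by ring
          _ ≤ _ := h4.trans h5
          _ = _ := by push_cast; ring
      exact le_of_mul_le_mul_left h6 (by positivity)
    obtain ⟨t, ht⟩ := exists_nat_gt (C * (K : ℚ) ^ (s - 1))
    have := key (t + 1) (by omega)
    push_cast at this
    linarith

theorem pow_zero_aux (G : PowerSeries ℕ) (M : ℕ) (h : ∀ n ≥ M, PowerSeries.coeff n G = 0) (s : ℕ) :
    ∃ N, ∀ n ≥ N, PowerSeries.coeff n (G ^ s) = 0 := by
  have : G = (PowerSeries.trunc M G : PowerSeries ℕ) := by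
    ext n
    rw [Polynomial.coeff_coe, PowerSeries.coeff_trunc]
    split_ifs with h'
    · rfl
    · exact h n (by omega)
  refine ⟨(PowerSeries.trunc M G ^ s).natDegree + 1, fun n hn => ?_⟩
  rw [this, ← Polynomial.coe_pow, Polynomial.coeff_coe]
  exact Polynomial.coeff_eq_zero_of_natDegree_lt (by omega)

theorem stmt0 (A : Set ℕ) (hA : A.Infinite) (hApos : ∀ a ∈ A, 0 < a)
    (r : ℕ) (hr : 1 ≤ r) (k m : Fin r → ℕ)
    (hk : ∀ i, 0 < k i) (hkmono : StrictMono k) (hm : ∀ i, 0 < m i)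
    (s : ℕ) (hs : s = Finset.univ.gcd m) (hs2 : 2 ≤ s)
    (q : Polynomial ℚ) (hq : q.degree ≤ (s - 2 : ℕ)) :
    ¬ ∀ᶠ n in Filter.atTop, (reprFn A r k m n : ℚ) = q.eval (n : ℚ) := by
  intro hev
  obtain ⟨N, hN⟩ := Filter.eventually_atTop.1 hev
  let G : PowerSeries ℕ := ∏ i, dilSeries A (k i) ^ (m i / s)
  have hG : G ^ s = ∏ i, dilSeries A (k i) ^ m i := by
    simp only [G, ← Finset.prod_pow, ← pow_mul]
    refine Finset.prod_congr rfl fun i _ => ?_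
    rw [Nat.div_mul_cancel]
    rw [hs]; exact Finset.gcd_dvd (Finset.mem_univ i)
  have hco : ∀ n, PowerSeries.coeff n (G ^ s) = reprFn A r k m n := fun n => by
    rw [hG]; exact (repr_aux A r k m hk n).1
  obtain ⟨M, hM⟩ := core_aux G s hs2 q hq N (fun n hn => by rw [hco]; exact hN n hn)
  obtain ⟨N2, hN2⟩ := pow_zero_aux G M hM s
  obtain ⟨a, ha, haN⟩ := hA.exists_gt N2
  let i0 : Fin r := ⟨0, hr⟩
  let n := ∑ i, k i * ∑ _j : Fin (m i), a
  have hn : N2 ≤ n := by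
    have h1 : k i0 * ∑ _j : Fin (m i0), a ≤ n :=
      Finset.single_le_sum (f := fun i => k i * ∑ _j : Fin (m i), a)
        (fun _ _ => Nat.zero_le _) (Finset.mem_univ i0)
    simp only [Finset.sum_const, Finset.card_univ, Fintype.card_fin, smul_eq_mul] at h1
    have h2 : a ≤ m i0 * a := Nat.le_mul_of_pos_left _ (hm i0)
    have h3 : m i0 * a ≤ k i0 * (m i0 * a) := Nat.le_mul_of_pos_left _ (hk i0)
    omega
  have h0 := hN2 n hn
  rw [hco] at h0
  have hfin := (repr_aux A r k m hk n).2
  have hne : Nonempty {a : (i : Fin r) → Fin (m i) → ℕ //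
      (∀ i j, a i j ∈ A) ∧ n = ∑ i, k i * ∑ j, a i j} :=
    ⟨⟨fun _ _ => a, fun _ _ => ha, rfl⟩⟩
  have := Nat.card_pos (α := {a : (i : Fin r) → Fin (m i) → ℕ //
      (∀ i j, a i j ∈ A) ∧ n = ∑ i, k i * ∑ j, a i j})
  unfold reprFn at h0
  omega
end

section
/- Let A be an infinite set of positive integers and let m = {(k_1,m_1),...,(k_r,m_r)} be a configuration whose degree s = gcd(m_1,...,m_r) satisfies s ≥ 2. Then the representation function r_m(n,A) is not eventually constant: for every constant c and every N there exists n > N with r_m(n,A) ≠ c. -/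
/-- indicator series of the dilate of a set -/
noncomputable def indS (A : Set ℕ) (k : ℕ) : PowerSeries ℕ :=
  open Classical in PowerSeries.mk fun n => if ∃ a ∈ A, n = k * a then 1 else 0

theorem reprFn_eq (A : Set ℕ) (r : ℕ) (k m : Fin r → ℕ) (hk : ∀ i, 0 < k i) (n : ℕ) :
    PowerSeries.coeff n (∏ i, indS A (k i) ^ m i) = reprFn A r k m n ∧
    Finite {a : (i : Fin r) → Fin (m i) → ℕ //
      (∀ i j, a i j ∈ A) ∧ n = ∑ i, k i * ∑ j, a i j} := by
  classical
  have h1 : (∏ i, indS A (k i) ^ m i) = ∏ p : (Σ i : Fin r, Fin (m i)), indS A (k p.1) := by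
    rw [Fintype.prod_sigma]
    simp
  let S := (Finset.finsuppAntidiag (Finset.univ : Finset (Σ i : Fin r, Fin (m i))) n).filter
    (fun l => ∀ p, ∃ a ∈ A, l p = k p.1 * a)
  have h2 : PowerSeries.coeff n (∏ i, indS A (k i) ^ m i) = S.card := by
    rw [h1, PowerSeries.coeff_prod, Finset.card_filter]
    refine Finset.sum_congr rfl fun l _ => ?_
    simp only [indS, PowerSeries.coeff_mk]
    rw [Finset.prod_ite_zero]
    simp
  let f : {a : (i : Fin r) → Fin (m i) → ℕ //
      (∀ i j, a i j ∈ A) ∧ n = ∑ i, k i * ∑ j, a i j} → S := fun a =>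
    ⟨Finsupp.equivFunOnFinite.symm (fun p => k p.1 * a.1 p.1 p.2), by
      simp only [S, Finset.mem_filter, Finset.mem_finsuppAntidiag]
      refine ⟨⟨?_, Finset.subset_univ _⟩, fun p => ⟨_, a.2.1 p.1 p.2, rfl⟩⟩
      simp only [Finsupp.equivFunOnFinite_symm_apply_apply]
      rw [Fintype.sum_sigma]
      refine Eq.trans ?_ a.2.2.symm
      simp [Finset.mul_sum]⟩
  have hf : Function.Bijective f := by
    constructor
    · intro a b hab
      apply Subtype.ext
      funext i j
      have := congrArg (fun x : S => x.1 ⟨i, j⟩) hab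
      simp only [f, Finsupp.equivFunOnFinite_symm_apply_apply] at this
      exact Nat.eq_of_mul_eq_mul_left (hk i) this
    · rintro ⟨l, hl⟩
      have hl' := hl
      simp only [S, Finset.mem_filter, Finset.mem_finsuppAntidiag] at hl'
      obtain ⟨⟨hs, -⟩, hp⟩ := hl'
      choose g hg hgl using hp
      refine ⟨⟨fun i j => g ⟨i, j⟩, fun i j => hg _, ?_⟩, ?_⟩
      · rw [← hs, Fintype.sum_sigma]
        simp [Finset.mul_sum, hgl]
      · apply Subtype.ext
        ext p
        simp [f, hgl]
  refine ⟨?_, Finite.of_injective f hf.1⟩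
  rw [h2, reprFn, Nat.card_eq_of_bijective f hf]
  simp

theorem bdd_poly_mul (g : PowerSeries ℤ) (B : ℤ) (hB : ∀ n, |PowerSeries.coeff n g| ≤ B)
    (P : Polynomial ℤ) : ∃ C : ℤ, ∀ n, |PowerSeries.coeff n ((P : PowerSeries ℤ) * g)| ≤ C := by
  induction P using Polynomial.induction_on' with
  | add p q hp hq =>
    obtain ⟨C, hC⟩ := hp
    obtain ⟨D, hD⟩ := hq
    refine ⟨C + D, fun n => ?_⟩
    rw [Polynomial.coe_add, add_mul, map_add]
    exact (abs_add_le _ _).trans (add_le_add (hC n) (hD n))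
  | monomial e a =>
    refine ⟨|a| * B, fun n => ?_⟩
    have hB0 : 0 ≤ B := (abs_nonneg _).trans (hB 0)
    rw [← Polynomial.C_mul_X_pow_eq_monomial, Polynomial.coe_mul, Polynomial.coe_C,
      Polynomial.coe_pow, Polynomial.coe_X, mul_assoc, PowerSeries.coeff_C_mul,
      PowerSeries.coeff_X_pow_mul', abs_mul]
    refine mul_le_mul_of_nonneg_left ?_ (abs_nonneg _)
    split_ifs
    · exact hB _
    · simpa using hB0

theorem poly_of_eventually_zero (g : PowerSeries ℤ) (M : ℕ)
    (h : ∀ n, M ≤ n → PowerSeries.coeff n g = 0) : ∃ P : Polynomial ℤ, (P : PowerSeries ℤ) = g := by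
  refine ⟨PowerSeries.trunc M g, ?_⟩
  ext n
  rw [Polynomial.coeff_coe, PowerSeries.coeff_trunc]
  split_ifs with hn
  · rfl
  · exact (h n (not_lt.mp hn)).symm

theorem key (g : PowerSeries ℤ) (B : ℤ) (hB : ∀ n, |PowerSeries.coeff n g| ≤ B) (s : ℕ)
    (hs : 2 ≤ s) (c : ℤ) (hc : c ≠ 0) (N : ℕ)
    (h : ∀ n, N < n → PowerSeries.coeff n (g ^ s) = c) : False := by
  obtain ⟨Q, hQ⟩ := poly_of_eventually_zero (g ^ s * (1 - PowerSeries.X)) (N + 2) (by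
    intro n hn
    obtain ⟨n, rfl⟩ : ∃ n', n = n' + 1 := ⟨n - 1, by omega⟩
    rw [mul_sub, mul_one, map_sub, PowerSeries.coeff_succ_mul_X, h _ (by omega), h _ (by omega)]
    simp)
  have inj : Function.Injective (fun P : Polynomial ℤ => (P : PowerSeries ℤ)) :=
    Polynomial.coe_injective ℤ
  have hX : ((1 - Polynomial.X : Polynomial ℤ) : PowerSeries ℤ) = 1 - PowerSeries.X := by
    simp
  have hX0 : (1 - PowerSeries.X : PowerSeries ℤ) ≠ 0 := by
    intro h0
    have := congrArg (PowerSeries.coeff 0) h0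
    simp at this
  have hX0' : (1 - Polynomial.X : Polynomial ℤ) ≠ 0 := by
    intro h0; apply hX0; rw [← hX, h0]; simp
  have hQ1 : ¬ (1 - Polynomial.X) ∣ Q := by
    rintro ⟨R, rfl⟩
    rw [Polynomial.coe_mul, hX, mul_comm] at hQ
    have hR := mul_right_cancel₀ hX0 hQ
    have h1 := h (N + R.natDegree + 1) (by omega)
    rw [← hR, Polynomial.coeff_coe, Polynomial.coeff_eq_zero_of_natDegree_lt (by omega)] at h1
    exact hc h1.symm
  obtain ⟨t, rfl⟩ : ∃ t, s = t + 1 := ⟨s - 1, by omega⟩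
  have hg0 : g ≠ 0 := by
    rintro rfl
    have := h (N + 1) (by omega)
    simp at this
    exact hc this.symm
  let T : Polynomial ℤ := Q * (1 - Polynomial.X)
  let U : Polynomial ℤ := Q + Polynomial.derivative Q * (1 - Polynomial.X)
  let D := PowerSeries.derivative ℤ
  have hDQ : D (Q : PowerSeries ℤ) = (Polynomial.derivative Q : Polynomial ℤ) := by
    exact PowerSeries.derivative_coe Q
  have hT : (T : PowerSeries ℤ) = (Q : PowerSeries ℤ) * (1 - PowerSeries.X) := by simp [T]
  have hDX : D (1 - PowerSeries.X : PowerSeries ℤ) = -1 := by simp [D]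
  have e1 : D (Q : PowerSeries ℤ) = ((t : PowerSeries ℤ) + 1) * g ^ t * D g * (1 - PowerSeries.X) - g ^ (t + 1) := by
    rw [hQ, Derivation.leibniz, Derivation.leibniz_pow, hDX]
    simp
    ring
  have e2 : ((t : PowerSeries ℤ) + 1) * ((T : PowerSeries ℤ) * D g) = (U : PowerSeries ℤ) * g := by
    have hU : (U : PowerSeries ℤ) = (Q : PowerSeries ℤ) + D (Q : PowerSeries ℤ) * (1 - PowerSeries.X) := by rw [hDQ]; simp [U]
    rw [hU, hT, e1, hQ]
    ring
  have e3 : ((t : PowerSeries ℤ) + 1) * D ((T : PowerSeries ℤ) * g)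
      = (((t + 1 : Polynomial ℤ) * Polynomial.derivative T + U : Polynomial ℤ) : PowerSeries ℤ) * g := by
    have hDT : D (T : PowerSeries ℤ) = (Polynomial.derivative T : Polynomial ℤ) :=
      PowerSeries.derivative_coe T
    rw [Derivation.leibniz, smul_eq_mul, smul_eq_mul, mul_add, e2, hDT]
    have ht : (((t : Polynomial ℤ)) : PowerSeries ℤ) = (t : PowerSeries ℤ) :=
      map_natCast (Polynomial.coeToPowerSeries.ringHom (R := ℤ)) t
    simp [ht]
    ring
  obtain ⟨C, hC⟩ := bdd_poly_mul g B hB ((t + 1 : Polynomial ℤ) * Polynomial.derivative T + U)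
  have hC0 : 0 ≤ C := (abs_nonneg _).trans (hC 0)
  obtain ⟨W, hW⟩ := poly_of_eventually_zero ((T : PowerSeries ℤ) * g) (C.toNat + 1) (by
    intro n hn
    obtain ⟨n, rfl⟩ : ∃ n', n = n' + 1 := ⟨n - 1, by omega⟩
    have h1 := hC n
    rw [← e3, show ((t : PowerSeries ℤ) + 1) = PowerSeries.C ((t : ℤ) + 1) by simp,
      PowerSeries.coeff_C_mul, PowerSeries.coeff_derivative] at h1
    by_contra hne
    have h2 : 1 ≤ |PowerSeries.coeff (n + 1) ((T : PowerSeries ℤ) * g)| := Int.one_le_abs hne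
    rw [abs_mul, abs_mul, abs_of_nonneg (by positivity : (0 : ℤ) ≤ t + 1),
      abs_of_nonneg (by positivity : (0 : ℤ) ≤ n + 1)] at h1
    have h3 : C < (n : ℤ) + 1 := by omega
    have ht : (0 : ℤ) ≤ t := by positivity
    have h4 : (n : ℤ) + 1 ≤ |PowerSeries.coeff (n + 1) ((T : PowerSeries ℤ) * g)| * (n + 1) :=
      le_mul_of_one_le_left (by positivity) h2
    nlinarith)
  have e4 : W ^ (t + 1) = Q ^ (t + 2) * (1 - Polynomial.X) ^ t := by
    apply inj
    simp only [Polynomial.coe_pow, Polynomial.coe_mul, hX, hW, hT]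
    rw [mul_pow, mul_pow, pow_succ (Q : PowerSeries ℤ) (t + 1)]
    conv_rhs => rw [hQ]
    conv_lhs => rw [hQ]
    ring
  have hprime : Prime (1 - Polynomial.X : Polynomial ℤ) := by
    have h1 := (Polynomial.prime_X_sub_C (1 : ℤ)).neg
    simpa using h1
  have hQ0 : Q ≠ 0 := by rintro rfl; exact hQ1 (dvd_zero _)
  have hW0 : W ≠ 0 := by
    rintro rfl
    rw [zero_pow (by omega)] at e4
    exact mul_ne_zero (pow_ne_zero _ hQ0) (pow_ne_zero _ hX0') e4.symm
  have e5 := congrArg (emultiplicity (1 - Polynomial.X : Polynomial ℤ)) e4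
  have hfin : FiniteMultiplicity (1 - Polynomial.X : Polynomial ℤ) W :=
    FiniteMultiplicity.of_prime_left hprime hW0
  rw [emultiplicity_mul hprime, emultiplicity_pow hprime, emultiplicity_pow hprime,
    emultiplicity_eq_zero.mpr hQ1, mul_zero, zero_add,
    emultiplicity_pow_self hX0' hprime.not_unit,
    hfin.emultiplicity_eq_multiplicity] at e5
  have e6 : (t + 1) * multiplicity (1 - Polynomial.X : Polynomial ℤ) W = t := by exact_mod_cast e5
  rcases Nat.eq_zero_or_pos (multiplicity (1 - Polynomial.X : Polynomial ℤ) W) with h0 | h0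
  · rw [h0] at e6; omega
  · nlinarith

theorem stmt1 (A : Set ℕ) (hA : A.Infinite) (hApos : ∀ a ∈ A, 0 < a)
    (r : ℕ) (hr : 1 ≤ r) (k m : Fin r → ℕ)
    (hk : ∀ i, 0 < k i) (hkmono : StrictMono k) (hm : ∀ i, 0 < m i)
    (s : ℕ) (hs : s = Finset.univ.gcd m) (hs2 : 2 ≤ s) :
    ∀ (c : ℕ) (N : ℕ), ∃ n > N, reprFn A r k m n ≠ c := by
  intro c N
  by_contra! hcon
  have hc : c ≠ 0 := by
    obtain ⟨a, haA, ha⟩ := hA.exists_gt N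
    let i0 : Fin r := ⟨0, hr⟩
    have h1 : N < ∑ i, k i * ∑ _j : Fin (m i), a := by
      refine lt_of_lt_of_le ha ?_
      refine le_trans ?_ (Finset.single_le_sum (f := fun i => k i * ∑ _j : Fin (m i), a)
        (fun _ _ => Nat.zero_le _) (Finset.mem_univ i0))
      simp only [Finset.sum_const, Finset.card_univ, Fintype.card_fin, smul_eq_mul]
      exact (Nat.le_mul_of_pos_left _ (hm i0)).trans (Nat.le_mul_of_pos_left _ (hk i0))
    rw [← hcon _ h1, reprFn]
    have := (reprFn_eq A r k m hk (∑ i, k i * ∑ _j : Fin (m i), a)).2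
    have : Nonempty {b : (i : Fin r) → Fin (m i) → ℕ // (∀ i j, b i j ∈ A) ∧
      (∑ i, k i * ∑ _j : Fin (m i), a) = ∑ i, k i * ∑ j, b i j} :=
      ⟨⟨fun _ _ => a, fun _ _ => haA, rfl⟩⟩
    exact Nat.card_pos.ne'
  let G : PowerSeries ℕ := ∏ i, indS A (k i) ^ (m i / s)
  have hG : G ^ s = ∏ i, indS A (k i) ^ m i := by
    rw [← Finset.prod_pow]
    refine Finset.prod_congr rfl fun i _ => ?_
    rw [← pow_mul, Nat.div_mul_cancel]
    rw [hs]
    exact Finset.gcd_dvd (Finset.mem_univ i)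
  have hcoef : ∀ n, N < n → PowerSeries.coeff n (G ^ s) = c := fun n hn => by
    rw [hG, (reprFn_eq A r k m hk n).1, hcon n hn]
  have hne : G ^ (s - 1) ≠ 0 := by
    intro h0
    have h1 := hcoef (N + 1) (by omega)
    rw [← Nat.sub_add_cancel (by omega : 1 ≤ s), pow_succ, h0] at h1
    simp at h1
    exact hc h1.symm
  obtain ⟨b, hb⟩ : ∃ b, PowerSeries.coeff b (G ^ (s - 1)) ≠ 0 := by
    by_contra! h0
    exact hne (PowerSeries.ext (by simpa using h0))
  have hbd : ∀ n, PowerSeries.coeff n G ≤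
      c + ∑ i ∈ Finset.range (N + 1), PowerSeries.coeff i (G ^ s) := by
    intro n
    have h1 : PowerSeries.coeff n G ≤ PowerSeries.coeff (b + n) (G ^ s) := by
      rw [← Nat.sub_add_cancel (by omega : 1 ≤ s), pow_succ, PowerSeries.coeff_mul]
      refine le_trans ?_ (Finset.single_le_sum
        (f := fun p : ℕ × ℕ => PowerSeries.coeff p.1 (G ^ (s - 1)) * PowerSeries.coeff p.2 G)
        (fun _ _ => Nat.zero_le _) (Finset.HasAntidiagonal.mem_antidiagonal.mpr (rfl : (b, n).1 + (b, n).2 = b + n)))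
      exact Nat.le_mul_of_pos_left _ (Nat.pos_of_ne_zero hb)
    refine h1.trans ?_
    by_cases hN : N < b + n
    · rw [hcoef _ hN]; exact Nat.le_add_right _ _
    · exact (Finset.single_le_sum (f := fun i => PowerSeries.coeff i (G ^ s))
        (fun _ _ => Nat.zero_le _) (Finset.mem_range.mpr (by omega))).trans (Nat.le_add_left _ _)
  refine key (PowerSeries.map (Nat.castRingHom ℤ) G)
    ((c + ∑ i ∈ Finset.range (N + 1), PowerSeries.coeff i (G ^ s) : ℕ) : ℤ) ?_ s hs2 c
    (by exact_mod_cast hc) N ?_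
  · intro n
    rw [PowerSeries.coeff_map, eq_natCast, Nat.abs_cast]
    exact_mod_cast hbd n
  · intro n hn
    rw [← map_pow, PowerSeries.coeff_map, hcoef n hn, eq_natCast]
end

section
/- Let A be an infinite set of positive integers and let k ≥ 2 be an integer. Then the function assigning to each positive integer n the number of ordered k-tuples (a_1,...,a_k) with all a_i ∈ A and a_1 + ... + a_k = n is not eventually constant: for every constant c and every N there exists n > N for which this count differs from c. -/
/-- The `k`-fold representation function: the number of ordered `k`-tuples of
elements of `A` summing to `n`. -/
noncomputable def reprFnFold (A : Set ℕ) (k : ℕ) (n : ℕ) : ℕ :=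
  Nat.card {a : Fin k → ℕ // (∀ i, a i ∈ A) ∧ ∑ i, a i = n}

open Classical in
noncomputable def genF (R : Type*) [CommRing R] (A : Set ℕ) : PowerSeries R :=
  PowerSeries.mk fun n => if n ∈ A then 1 else 0

lemma coeff_genF_pow (R : Type*) [CommRing R] (A : Set ℕ) (k n : ℕ) :
    PowerSeries.coeff n (genF R A ^ k) = (reprFnFold A k n : R) := by
  classical
  have h : genF R A ^ k = ∏ _i : Fin k, genF R A := by simp
  rw [h, PowerSeries.coeff_prod]
  have h2 : ∀ l : Fin k →₀ ℕ, ∏ i : Fin k, PowerSeries.coeff (l i) (genF R A)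
      = if (∀ i, l i ∈ A) then 1 else 0 := by
    intro l
    simp only [genF, PowerSeries.coeff_mk]
    rw [Finset.prod_ite_zero]
    simp
  simp only [h2]
  rw [Finset.sum_boole]
  congr 1
  unfold reprFnFold
  rw [← Nat.card_eq_finsetCard]
  refine Nat.card_congr (Finsupp.equivFunOnFinite.subtypeEquiv ?_)
  intro l
  simp [Finset.mem_finsuppAntidiag, and_comm]

lemma case_two (A : Set ℕ) (hA : A.Infinite) (c N : ℕ)
    (h : ∀ n > N, reprFnFold A 2 n = c) : False := by
  classical
  obtain ⟨a, haA, ha⟩ := hA.exists_gt N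
  have key : ∀ n, (reprFnFold A 2 n : ZMod 2) = ∑ p ∈ Finset.HasAntidiagonal.antidiagonal n,
      ((if p.1 ∈ A then 1 else 0) * (if p.2 ∈ A then 1 else 0) : ZMod 2) := by
    intro n
    rw [← coeff_genF_pow, pow_two, PowerSeries.coeff_mul]
    simp [genF]
  have two : ∀ x : ZMod 2, x + x = 0 := by decide
  have h1 : (c : ZMod 2) = 0 := by
    rw [← h (2*a+1) (by omega), key]
    apply Finset.sum_involution (fun p _ => p.swap)
    · intro p _; rw [mul_comm]; exact two _
    · intro p hp _ he
      have := Finset.HasAntidiagonal.mem_antidiagonal.1 hp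
      have := congrArg Prod.fst he
      simp at this; omega
    · intro p hp
      have := Finset.HasAntidiagonal.mem_antidiagonal.1 hp
      simp; try omega
    · intro p hp
      have := Finset.HasAntidiagonal.mem_antidiagonal.1 hp
      simp; try omega
  have h0 : (c : ZMod 2) = 1 := by
    rw [← h (2*a) (by omega), key]
    rw [← Finset.add_sum_erase _ _ (a := (a,a)) (by simp; omega)]
    rw [Finset.sum_involution (fun p _ => p.swap)]
    · simp [haA]
    · intro p _; rw [mul_comm]; exact two _
    · intro p hp _ he
      obtain ⟨x, y⟩ := p
      simp at hp he; omega
    · rintro ⟨x, y⟩ hp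
      simp at hp ⊢; omega
    · intro p _; simp
  rw [h1] at h0
  exact absurd h0 (by decide)

noncomputable def uf (A : Set ℕ) (n : ℕ) : ℂ := PowerSeries.coeff n (genF ℂ A)

noncomputable def ff (A : Set ℕ) (z : ℂ) : ℂ := ∑' n, uf A n * z ^ n

lemma uf_mem {A : Set ℕ} {n : ℕ} (h : n ∈ A) : uf A n = 1 := by simp [uf, genF, h]
lemma uf_not_mem {A : Set ℕ} {n : ℕ} (h : n ∉ A) : uf A n = 0 := by simp [uf, genF, h]
lemma uf_norm (A : Set ℕ) (n : ℕ) : ‖uf A n‖ ≤ 1 := by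
  by_cases h : n ∈ A
  · simp [uf_mem h]
  · simp [uf_not_mem h]

lemma uf_summable (A : Set ℕ) {z : ℂ} (hz : ‖z‖ < 1) : Summable fun n => ‖uf A n * z ^ n‖ := by
  refine Summable.of_nonneg_of_le (fun _ => norm_nonneg _) (fun n => ?_)
    (summable_geometric_of_lt_one (norm_nonneg z) hz)
  rw [norm_mul, norm_pow]
  exact mul_le_of_le_one_left (by positivity) (uf_norm A n)

lemma cauchy_aux (f g : ℕ → ℂ) (hf : Summable fun n => ‖f n‖) (hg : Summable fun n => ‖g n‖) :
    (Summable fun n => ‖∑ p ∈ Finset.HasAntidiagonal.antidiagonal n, f p.1 * g p.2‖) ∧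
    ∑' n, ∑ p ∈ Finset.HasAntidiagonal.antidiagonal n, f p.1 * g p.2 = (∑' n, f n) * ∑' n, g n :=
  ⟨summable_norm_sum_mul_antidiagonal_of_summable_norm hf hg,
    (tsum_mul_tsum_eq_tsum_sum_antidiagonal_of_summable_norm hf hg).symm⟩

lemma hasSum_pow_aux (A : Set ℕ) {z : ℂ} (hz : ‖z‖ < 1) (k : ℕ) :
    (Summable fun n => ‖PowerSeries.coeff n (genF ℂ A ^ k) * z ^ n‖) ∧
    ∑' n, PowerSeries.coeff n (genF ℂ A ^ k) * z ^ n = ff A z ^ k := by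
  induction k with
  | zero =>
    have h0 : ∀ n, n ≠ 0 → PowerSeries.coeff n (genF ℂ A ^ 0) * z ^ n = 0 := by
      intro n hn
      simp [PowerSeries.coeff_one, hn]
    constructor
    · apply summable_of_ne_finset_zero (s := {0})
      intro n hn
      rw [h0 n (by simpa using hn), norm_zero]
    · rw [tsum_eq_single 0 h0]; simp
  | succ k ih =>
    have e : ∀ n, PowerSeries.coeff n (genF ℂ A ^ (k+1)) * z ^ n =
        ∑ p ∈ Finset.HasAntidiagonal.antidiagonal n,
          (PowerSeries.coeff p.1 (genF ℂ A ^ k) * z ^ p.1) * (uf A p.2 * z ^ p.2) := by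
      intro n
      rw [pow_succ, PowerSeries.coeff_mul, Finset.sum_mul]
      refine Finset.sum_congr rfl fun p hp => ?_
      rw [← Finset.HasAntidiagonal.mem_antidiagonal.1 hp, pow_add, uf]
      ring
    have hu := uf_summable A hz
    obtain ⟨ih1, ih2⟩ := ih
    have hc := cauchy_aux (fun n => PowerSeries.coeff n (genF ℂ A ^ k) * z ^ n)
      (fun n => uf A n * z ^ n) ih1 hu
    rw [ih2] at hc
    rw [pow_succ (ff A z)]
    constructor
    · refine hc.1.congr fun n => ?_
      rw [e]
    · rw [tsum_congr e]
      exact hc.2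

lemma ff_pow (A : Set ℕ) {z : ℂ} (hz : ‖z‖ < 1) (k : ℕ) :
    HasSum (fun n => (reprFnFold A k n : ℂ) * z ^ n) (ff A z ^ k) := by
  have := hasSum_pow_aux A hz k
  simp only [coeff_genF_pow] at this
  rw [← this.2]
  exact this.1.of_norm.hasSum

lemma ff_bound (A : Set ℕ) (k c N : ℕ) (h : ∀ n > N, reprFnFold A k n = c) :
    ∃ B : ℝ, 0 ≤ B ∧ ∀ z : ℂ, ‖z‖ < 1 → ‖ff A z‖ ^ k * ‖1 - z‖ ≤ B := by
  refine ⟨(∑ n ∈ Finset.range (N+1), ‖(reprFnFold A k n : ℂ) - c‖) * 2 + c, by positivity, ?_⟩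
  intro z hz
  have h1 := (ff_pow A hz k).sub ((hasSum_geometric_of_norm_lt_one hz).mul_left (c:ℂ))
  have h2 := hasSum_sum_of_ne_finset_zero (L := SummationFilter.unconditional ℕ) (f := fun n => (reprFnFold A k n : ℂ) * z ^ n - c * z ^ n)
    (s := Finset.range (N+1)) (by
      intro n hn
      rw [h n (by simpa using hn)]; simp)
  have h3 := h1.unique h2
  have hz1 : 1 - z ≠ 0 := by
    intro h0
    rw [← sub_eq_zero.1 h0] at hz; simp at hz
  have h4 : ff A z ^ k * (1 - z) =
      (∑ n ∈ Finset.range (N+1), ((reprFnFold A k n : ℂ) * z ^ n - c * z ^ n)) * (1 - z) + c := by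
    rw [← h3]; field_simp; ring
  rw [← norm_pow, ← norm_mul, h4]
  refine (norm_add_le _ _).trans ?_
  rw [norm_mul]
  have h5 : ‖1 - z‖ ≤ 2 := (norm_sub_le _ _).trans (by simp; linarith)
  have h6 : ‖∑ n ∈ Finset.range (N+1), ((reprFnFold A k n : ℂ) * z ^ n - c * z ^ n)‖ ≤
      ∑ n ∈ Finset.range (N+1), ‖(reprFnFold A k n : ℂ) - c‖ := by
    refine norm_sum_le_of_le _ fun n _ => ?_
    rw [← sub_mul, norm_mul, norm_pow]
    exact mul_le_of_le_one_right (norm_nonneg _) (pow_le_one₀ (norm_nonneg _) hz.le)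
  gcongr
  simp

open Real in
lemma circ_bound {r θ : ℝ} (hr0 : 0 ≤ r) (hr : r < 1) (hθ : |θ| ≤ π) :
    |θ| / π ≤ ‖1 - (r:ℂ) * Complex.exp (Complex.I * θ)‖ := by
  have h1 : ‖Complex.exp (Complex.I * θ) - 1‖ = ‖2 * Real.sin (θ / 2)‖ :=
    Complex.norm_exp_I_mul_ofReal_sub_one θ
  have h2 := Real.mul_abs_le_abs_sin (x := θ / 2) (by rw [abs_div]; simp; linarith)
  rw [norm_mul, Real.norm_eq_abs, Real.norm_eq_abs] at h1
  rw [abs_div] at h2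
  simp only [abs_two] at h1 h2
  set e := Complex.exp (Complex.I * θ) with he
  have hne : ‖e‖ = 1 := by rw [he, mul_comm]; exact Complex.norm_exp_ofReal_mul_I θ
  have h3 : ‖e - 1‖ ≤ ‖1 - (r:ℂ) * e‖ + (1 - r) := by
    have : e - 1 = -(1 - (r:ℂ) * e) + ((1 - r : ℝ) : ℂ) * e := by push_cast; ring
    rw [this]
    refine (norm_add_le _ _).trans ?_
    rw [norm_neg, norm_mul, hne, Complex.norm_real, Real.norm_eq_abs, abs_of_pos (by linarith)]
    simp
  have h4 : 1 - r ≤ ‖1 - (r:ℂ) * e‖ := by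
    have := norm_sub_norm_le (1:ℂ) ((r:ℂ) * e)
    rw [norm_mul, hne, Complex.norm_real, Real.norm_eq_abs, abs_of_nonneg hr0] at this
    simpa using this
  have h5 : 2 / π * (|θ| / 2) = |θ| / π := by ring
  rw [h5] at h2
  linarith

open Real in
lemma integral_exp_int (m : ℤ) :
    ∫ θ in (-π)..π, Complex.exp (m * Complex.I * θ) = if m = 0 then 2 * (π : ℂ) else 0 := by
  split_ifs with h
  · simp [h]; ring
  · have hc : (m * Complex.I : ℂ) ≠ 0 := by simp [h]
    rw [integral_exp_mul_complex hc]
    have : Complex.exp (m * Complex.I * (π:ℝ)) = Complex.exp (m * Complex.I * ((-π : ℝ):ℂ)) := by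
      rw [Complex.exp_eq_exp_iff_exists_int]
      exact ⟨m, by push_cast; ring⟩
    rw [this]; simp

open Real in
lemma integrable_abs_rpow (a : ℝ) (ha : -1 < a) :
    IntervalIntegrable (fun x : ℝ => |x| ^ a) MeasureTheory.volume (-π) π := by
  have h : IntervalIntegrable (fun x : ℝ => |x| ^ a) MeasureTheory.volume 0 π := by
    refine (intervalIntegral.intervalIntegrable_rpow' (a := 0) (b := π) ha).congr ?_
    intro x hx
    rw [Set.uIoc_of_le pi_pos.le] at hx
    simp [abs_of_pos hx.1]
  refine IntervalIntegrable.trans (b := 0) ?_ h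
  rw [IntervalIntegrable.iff_comp_neg]
  simpa using h.symm

open Real in
lemma parseval (A : Set ℕ) {r : ℝ} (hr0 : 0 ≤ r) (hr : r < 1) (S : Finset ℕ)
    (hS : ∀ a ∈ S, a ∈ A) :
    IntervalIntegrable (fun θ : ℝ => ‖ff A (r * Complex.exp (Complex.I * θ))‖ ^ 2)
      MeasureTheory.volume (-π) π ∧
    2 * π * ∑ a ∈ S, r ^ (2 * a) ≤
      ∫ θ in (-π)..π, ‖ff A (r * Complex.exp (Complex.I * θ))‖ ^ 2 := by
  classical
  set z : ℝ → ℂ := fun θ => r * Complex.exp (Complex.I * θ) with hz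
  have hzn : ∀ θ, ‖z θ‖ = r := by
    intro θ
    rw [hz]
    simp only
    rw [norm_mul, mul_comm Complex.I, Complex.norm_exp_ofReal_mul_I, Complex.norm_real,
      Real.norm_eq_abs, abs_of_nonneg hr0, mul_one]
  have hzc : Continuous z := by fun_prop
  let T : ℕ × ℕ → ℝ → ℂ := fun p θ =>
    (uf A p.1 * z θ ^ p.1) * (starRingEnd ℂ) (uf A p.2 * z θ ^ p.2)
  have hT : ∀ θ, HasSum (fun p => T p θ) ((‖ff A (z θ)‖ ^ 2 : ℝ) : ℂ) := by
    intro θ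
    have h1 := uf_summable A (z := z θ) (by rw [hzn]; exact hr)
    have h2 : Summable fun n => ‖(starRingEnd ℂ) (uf A n * z θ ^ n)‖ := by simpa using h1
    have h3 := summable_mul_of_summable_norm h1 h2
    have h4 := tsum_mul_tsum_of_summable_norm h1 h2
    have h5 : ((‖ff A (z θ)‖ ^ 2 : ℝ) : ℂ) = ∑' p, T p θ := by
      rw [← h4, ← Complex.conj_tsum]
      push_cast
      rw [← Complex.mul_conj']
      rfl
    rw [h5]
    exact h3.hasSum
  have hTc : ∀ p, Continuous (T p) := by
    intro p
    have := Complex.continuous_conj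
    fun_prop
  have hb : ∀ p θ, ‖T p θ‖ ≤ r ^ p.1 * r ^ p.2 := by
    intro p θ
    simp only [T, norm_mul, RCLike.norm_conj, norm_pow, hzn]
    gcongr
    · exact mul_le_of_le_one_left (by positivity) (uf_norm _ _)
    · exact mul_le_of_le_one_left (by positivity) (uf_norm _ _)
  have hbs : Summable fun p : ℕ × ℕ => r ^ p.1 * r ^ p.2 :=
    Summable.mul_of_nonneg (summable_geometric_of_lt_one hr0 hr)
      (summable_geometric_of_lt_one hr0 hr) (fun _ => by positivity) (fun _ => by positivity)
  have hcont : Continuous fun θ => ‖ff A (z θ)‖ ^ 2 := by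
    have h1 : Continuous fun θ => ∑' p, T p θ := continuous_tsum hTc hbs hb
    have h2 : (fun θ => ‖ff A (z θ)‖ ^ 2) = fun θ => (∑' p, T p θ).re := by
      funext θ
      rw [(hT θ).tsum_eq, Complex.ofReal_re]
    rw [h2]
    exact Complex.continuous_re.comp h1
  refine ⟨hcont.intervalIntegrable _ _, ?_⟩
  have hI := intervalIntegral.hasSum_integral_of_dominated_convergence (a := -π) (b := π)
    (μ := MeasureTheory.volume) (F := T) (f := fun θ => ((‖ff A (z θ)‖ ^ 2 : ℝ) : ℂ))
    (fun p _ => r ^ p.1 * r ^ p.2) (fun p => (hTc p).aestronglyMeasurable)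
    (fun p => Filter.Eventually.of_forall fun θ _ => hb p θ)
    (Filter.Eventually.of_forall fun θ _ => hbs) (by simp)
    (Filter.Eventually.of_forall fun θ _ => hT θ)
  rw [intervalIntegral.integral_ofReal] at hI
  have hTi : ∀ p, ∫ θ in (-π)..π, T p θ =
      ((if p.1 = p.2 ∧ p.1 ∈ A then 2 * π * r ^ (2 * p.1) else 0 : ℝ) : ℂ) := by
    intro p
    have e : ∀ θ : ℝ, T p θ = (uf A p.1 * (starRingEnd ℂ) (uf A p.2) * r ^ p.1 * r ^ p.2) *
        Complex.exp (((p.1 : ℤ) - (p.2 : ℤ) : ℤ) * Complex.I * θ) := by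
      intro θ
      have : Complex.exp (((p.1 : ℤ) - (p.2 : ℤ) : ℤ) * Complex.I * θ) =
          Complex.exp (Complex.I * θ) ^ p.1 * (starRingEnd ℂ) (Complex.exp (Complex.I * θ)) ^ p.2 := by
        rw [← Complex.exp_conj, ← Complex.exp_nat_mul, ← Complex.exp_nat_mul, ← Complex.exp_add]
        congr 1
        simp
        ring
      rw [this]
      simp only [T, hz, map_mul, map_pow, Complex.conj_ofReal]
      ring
    simp only [e]
    rw [intervalIntegral.integral_const_mul, integral_exp_int]
    by_cases hp : p.1 = p.2
    · by_cases hpA : p.1 ∈ A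
      · have hpA2 := hpA
        rw [hp] at hpA2
        simp only [hp, hpA2, uf_mem]
        simp
        ring
      · simp [hpA, uf_not_mem]
    · have : ((p.1 : ℤ) - (p.2 : ℤ)) ≠ 0 := by omega
      simp [hp, this]
  simp only [hTi] at hI
  have hI := Complex.hasSum_ofReal.1 hI
  have hle := sum_le_hasSum (S.image fun a => (a, a)) (fun p _ => by split_ifs <;> positivity) hI
  rw [Finset.sum_image (by intro a _ b _ h; exact congrArg Prod.fst h)] at hle
  refine le_trans (le_of_eq ?_) hle
  rw [Finset.mul_sum]
  exact Finset.sum_congr rfl fun a ha => by simp [hS a ha]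

open Real in
lemma case_ge_three (A : Set ℕ) (hA : A.Infinite) (k : ℕ) (hk : 3 ≤ k) (c N : ℕ)
    (h : ∀ n > N, reprFnFold A k n = c) : False := by
  obtain ⟨B, hB0, hB⟩ := ff_bound A k c N h
  let g : ℝ → ℝ := fun θ => 1 + (B * π) ^ (2/3 : ℝ) * |θ| ^ (-(2/3) : ℝ)
  have hg : IntervalIntegrable g MeasureTheory.volume (-π) π :=
    (intervalIntegrable_const).add ((integrable_abs_rpow (-(2/3)) (by norm_num)).const_mul _)
  set C := ∫ θ in (-π)..π, g θ with hC
  have key : ∀ S : Finset ℕ, (∀ a ∈ S, a ∈ A) → ∀ r : ℝ, 0 ≤ r → r < 1 →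
      2 * π * ∑ a ∈ S, r ^ (2 * a) ≤ C := by
    intro S hS r hr0 hr
    obtain ⟨hi, hp⟩ := parseval A hr0 hr S hS
    refine hp.trans ?_
    refine intervalIntegral.integral_mono_ae_restrict (by linarith [pi_pos]) hi hg ?_
    have h0 : ∀ᵐ θ : ℝ ∂(MeasureTheory.volume.restrict (Set.Icc (-π) π)), θ ≠ 0 :=
      MeasureTheory.ae_restrict_of_ae (MeasureTheory.Measure.ae_ne _ 0)
    filter_upwards [h0, MeasureTheory.ae_restrict_mem measurableSet_Icc] with θ hθ0 hθ
    have hθ' : |θ| ≤ π := abs_le.2 hθ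
    have hθp : 0 < |θ| := abs_pos.2 hθ0
    have b1 := circ_bound hr0 hr hθ'
    have b2 := hB (r * Complex.exp (Complex.I * θ)) (by
      rw [norm_mul, mul_comm Complex.I, Complex.norm_exp_ofReal_mul_I, Complex.norm_real,
        Real.norm_eq_abs, abs_of_nonneg hr0, mul_one]; exact hr)
    set y := ‖ff A (r * Complex.exp (Complex.I * θ))‖ with hy
    have hy0 : 0 ≤ y := norm_nonneg _
    have b3 : y ^ k ≤ B * π / |θ| := by
      have : y ^ k * (|θ| / π) ≤ B := le_trans (by gcongr) b2
      rw [le_div_iff₀ hθp]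
      rw [← mul_div_assoc, div_le_iff₀ pi_pos] at this
      exact this
    have hX : (B * π / |θ|) ^ (2/3 : ℝ) = (B * π) ^ (2/3 : ℝ) * |θ| ^ (-(2/3) : ℝ) := by
      rw [Real.div_rpow (by positivity) hθp.le, Real.rpow_neg hθp.le, div_eq_mul_inv]
    show y ^ 2 ≤ 1 + (B * π) ^ (2/3 : ℝ) * |θ| ^ (-(2/3) : ℝ)
    rw [← hX]
    have hXn : 0 ≤ (B * π / |θ|) ^ (2/3 : ℝ) := by positivity
    rcases le_total y 1 with hy1 | hy1
    · have : y ^ 2 ≤ 1 := pow_le_one₀ hy0 hy1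
      linarith
    · have b4 : y ^ 3 ≤ B * π / |θ| := (pow_le_pow_right₀ hy1 hk).trans b3
      have b5 : (y ^ 3) ^ (2/3 : ℝ) ≤ (B * π / |θ|) ^ (2/3 : ℝ) :=
        Real.rpow_le_rpow (by positivity) b4 (by norm_num)
      have b6 : (y ^ 3) ^ (2/3 : ℝ) = y ^ 2 := by
        rw [← Real.rpow_natCast, ← Real.rpow_mul hy0, ← Real.rpow_natCast]
        norm_num
      linarith
  obtain ⟨m, hm⟩ := exists_nat_gt C
  obtain ⟨S, hSA, hSc⟩ := hA.exists_subset_card_eq m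
  have hlim : Filter.Tendsto (fun r : ℝ => 2 * π * ∑ a ∈ S, r ^ (2 * a)) (nhdsWithin 1 (Set.Iio 1))
      (nhds (2 * π * ∑ a ∈ S, (1:ℝ) ^ (2 * a))) := by
    apply Filter.Tendsto.mono_left _ nhdsWithin_le_nhds
    apply Continuous.tendsto
    fun_prop
  have hle := le_of_tendsto hlim (by
    filter_upwards [Ioo_mem_nhdsLT (show (0:ℝ) < 1 by norm_num)] with r hr
    exact key S (fun a ha => hSA ha) r hr.1.le hr.2)
  simp [hSc] at hle
  have : (m:ℝ) ≤ 2 * π * m := by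
    have := Real.pi_gt_three
    have hm0 : (0:ℝ) ≤ m := by positivity
    nlinarith
  linarith

theorem stmt2 (A : Set ℕ) (hA : A.Infinite) (hApos : ∀ a ∈ A, 0 < a)
    (k : ℕ) (hk : 2 ≤ k) :
    ∀ (c : ℕ) (N : ℕ), ∃ n > N, reprFnFold A k n ≠ c := by
  intro c N
  by_contra hcon
  push Not at hcon
  rcases hk.eq_or_lt with rfl | hk3
  · exact case_two A hA c N hcon
  · exact case_ge_three A hA k hk3 c N hcon
end

section
/- Let A be an infinite set of positive integers, let m = {(k_1,m_1),...,(k_r,m_r)} be a configuration whose degree s = gcd(m_1,...,m_r) satisfies s ≥ 2, let c > 0 be a real constant and let ε > 0. Then there is no constant K such that |Σ_{j=1}^{n} (r_m(j,A) − c)| ≤ K·n^{1/4−ε} for all n ≥ 1; that is, Σ_{j=1}^{n}(r_m(j,A) − c) = O(n^{1/4−ε}) cannot hold. -/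
open MeasureTheory AddCircle

noncomputable def zz (ρ : ℝ) (t : UnitAddCircle) : ℂ := (ρ : ℂ) * fourier 1 t

noncomputable def ev (p : PowerSeries ℂ) (z : ℂ) : ℂ := ∑' n, PowerSeries.coeff n p * z ^ n

def Sm (p : PowerSeries ℂ) (ρ : ℝ) : Prop := Summable fun n => ‖PowerSeries.coeff n p‖ * ρ ^ n

lemma fourier_nat (n : ℕ) (t : UnitAddCircle) : fourier (n : ℤ) t = (fourier 1 t) ^ n := by
  induction n with
  | zero => simp
  | succ n ih =>
    push_cast
    rw [fourier_add, ih, pow_succ]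

lemma norm_zz {ρ : ℝ} (hρ : 0 ≤ ρ) (t : UnitAddCircle) : ‖zz ρ t‖ = ρ := by
  rw [zz, norm_mul, fourier_apply, Circle.norm_coe]; simp [abs_of_nonneg hρ]

lemma cont_zz (ρ : ℝ) : Continuous (zz ρ) := by
  unfold zz; fun_prop

lemma parseval_s5 {p : PowerSeries ℂ} {ρ : ℝ} (hρ : 0 ≤ ρ) (h : Sm p ρ) :
    Continuous (fun t => ev p (zz ρ t)) ∧
    HasSum (fun n => ‖PowerSeries.coeff n p‖ ^ 2 * (ρ ^ 2) ^ n)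
      (∫ t : UnitAddCircle, ‖ev p (zz ρ t)‖ ^ 2) := by
  set b : ℕ → ℂ := fun n => PowerSeries.coeff n p * (ρ : ℂ) ^ n with hb
  have hbs : Summable fun n => b n • (fourier (n : ℤ) : C(UnitAddCircle, ℂ)) := by
    apply Summable.of_norm
    refine h.congr fun n => ?_
    rw [norm_smul, fourier_norm]
    simp [hb, abs_of_nonneg hρ]
  obtain ⟨g, hg⟩ := hbs
  have hgev : ∀ t, g t = ev p (zz ρ t) := by
    intro t
    have := hg.mapL (ContinuousMap.evalCLM ℂ t)
    unfold ev
    rw [← HasSum.tsum_eq (show HasSum _ (g t) from this)]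
    congr 1
    ext n
    simp only [ContinuousMap.evalCLM_apply, ContinuousMap.smul_apply, smul_eq_mul, hb, zz, mul_pow]
    rw [fourier_nat]; ring
  have hc : Continuous (fun t => ev p (zz ρ t)) := by
    simp_rw [← hgev]; exact g.continuous
  refine ⟨hc, ?_⟩
  set v := ContinuousMap.toLp 2 (haarAddCircle (T := 1)) ℂ g with hv
  have hsv : HasSum (fun n : ℕ => b n • fourierLp (T := 1) 2 (n : ℤ)) v := by
    have := hg.mapL (ContinuousMap.toLp (E := ℂ) 2 (haarAddCircle (T := 1)) ℂ)
    simpa using this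
  have ho := orthonormal_fourier (T := 1)
  have h1 : ∀ n : ℕ, inner ℂ (fourierLp (T := 1) 2 (n : ℤ)) v = b n := by
    intro n
    have h2 : HasSum (fun k : ℕ => inner ℂ (fourierLp (T := 1) 2 (n : ℤ))
        (b k • fourierLp (T := 1) 2 (k : ℤ))) (inner ℂ (fourierLp (T := 1) 2 (n : ℤ)) v) :=
      hsv.mapL (innerSL ℂ (fourierLp (T := 1) 2 (n : ℤ)))
    have h3 : (fun k : ℕ => inner ℂ (fourierLp (T := 1) 2 (n : ℤ))
        (b k • fourierLp (T := 1) 2 (k : ℤ))) = fun k : ℕ => if k = n then b n else 0 := by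
      funext k
      rw [inner_smul_right, orthonormal_iff_ite.mp ho]
      by_cases hk : k = n
      · simp [hk]
      · have : ¬ (n : ℤ) = k := by omega
        simp [hk, this]
    rw [h3] at h2
    exact h2.unique (hasSum_ite_eq n (b n))
  have h4 : HasSum (fun k : ℕ => inner ℂ v
        (b k • fourierLp (T := 1) 2 (k : ℤ))) (inner ℂ v v) := hsv.mapL (innerSL ℂ v)
  have h5 : inner ℂ v v = ((∫ t : UnitAddCircle, ‖ev p (zz ρ t)‖ ^ 2 : ℝ) : ℂ) := by
    rw [L2.inner_def]
    have : (volume : Measure UnitAddCircle) = haarAddCircle := by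
      rw [AddCircle.volume_eq_smul_haarAddCircle]; simp
    rw [this, ← integral_complex_ofReal]
    apply integral_congr_ae
    filter_upwards [ContinuousMap.coeFn_toLp (p := 2) (𝕜 := ℂ) (haarAddCircle (T := 1)) g] with t ht
    rw [ht, inner_self_eq_norm_sq_to_K, hgev]
    simp
  rw [← Complex.hasSum_ofReal]
  rw [← h5]
  refine h4.congr_fun fun n => ?_
  rw [inner_smul_right, ← inner_conj_symm, h1, Complex.mul_conj, Complex.normSq_eq_norm_sq]
  simp only [hb, norm_mul, norm_pow, Complex.norm_real, Real.norm_eq_abs, abs_of_nonneg hρ]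
  push_cast; ring
lemma Sm.norm {p : PowerSeries ℂ} {z : ℂ} (h : Sm p ‖z‖) :
    Summable fun n => ‖PowerSeries.coeff n p * z ^ n‖ := by
  refine Summable.congr h fun n => ?_
  simp

lemma Sm.hasSum {p : PowerSeries ℂ} {z : ℂ} (h : Sm p ‖z‖) :
    HasSum (fun n => PowerSeries.coeff n p * z ^ n) (ev p z) :=
  h.norm.of_norm.hasSum

lemma mul_term (p q : PowerSeries ℂ) (z : ℂ) (n : ℕ) :
    ∑ kl ∈ Finset.HasAntidiagonal.antidiagonal n, (PowerSeries.coeff kl.1 p * z ^ kl.1) *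
      (PowerSeries.coeff kl.2 q * z ^ kl.2) = PowerSeries.coeff n (p * q) * z ^ n := by
  rw [PowerSeries.coeff_mul, Finset.sum_mul]
  refine Finset.sum_congr rfl fun x hx => ?_
  rw [← Finset.HasAntidiagonal.mem_antidiagonal.mp hx, pow_add]; ring

lemma Sm.mul {p q : PowerSeries ℂ} {ρ : ℝ} (hρ : 0 ≤ ρ) (hp : Sm p ρ) (hq : Sm q ρ) :
    Sm (p * q) ρ := by
  have hz : ‖(ρ : ℂ)‖ = ρ := by simp [abs_of_nonneg hρ]
  rw [← hz] at hp hq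
  have := summable_norm_sum_mul_antidiagonal_of_summable_norm hp.norm hq.norm
  simp_rw [mul_term] at this
  refine Summable.congr this fun n => ?_
  simp [abs_of_nonneg hρ]

lemma ev_mul {p q : PowerSeries ℂ} {z : ℂ} (hp : Sm p ‖z‖) (hq : Sm q ‖z‖) :
    ev (p * q) z = ev p z * ev q z := by
  unfold ev
  rw [tsum_mul_tsum_eq_tsum_sum_antidiagonal_of_summable_norm hp.norm hq.norm]
  simp_rw [mul_term]

lemma Sm_fin {p : PowerSeries ℂ} (N : ℕ) (h : ∀ n, N ≤ n → PowerSeries.coeff n p = 0) (ρ : ℝ) :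
    Sm p ρ := by
  refine summable_of_ne_finset_zero (s := Finset.range N) fun n hn => ?_
  rw [h n (by simpa using hn)]; simp

lemma ev_fin {p : PowerSeries ℂ} (N : ℕ) (h : ∀ n, N ≤ n → PowerSeries.coeff n p = 0) (z : ℂ) :
    ev p z = ∑ n ∈ Finset.range N, PowerSeries.coeff n p * z ^ n := by
  refine tsum_eq_sum fun n hn => ?_
  rw [h n (by simpa using hn)]; simp

lemma Sm_one (ρ : ℝ) : Sm 1 ρ := Sm_fin 1 (by
  intro n hn; rw [PowerSeries.coeff_one, if_neg (by omega)]) ρ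

lemma ev_one (z : ℂ) : ev 1 z = 1 := by
  rw [ev_fin 1]
  · simp
  · intro n hn; rw [PowerSeries.coeff_one, if_neg (by omega)]

lemma Sm.pow {p : PowerSeries ℂ} {ρ : ℝ} (hρ : 0 ≤ ρ) (hp : Sm p ρ) (n : ℕ) : Sm (p ^ n) ρ := by
  induction n with
  | zero => simpa using Sm_one ρ
  | succ n ih => rw [pow_succ]; exact ih.mul hρ hp

lemma Sm.prod {ι : Type*} (s : Finset ι) (f : ι → PowerSeries ℂ) {ρ : ℝ} (hρ : 0 ≤ ρ)
    (h : ∀ i ∈ s, Sm (f i) ρ) : Sm (∏ i ∈ s, f i) ρ :=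
  Finset.prod_induction f (fun p => Sm p ρ) (fun _ _ ha hb => ha.mul hρ hb) (Sm_one ρ) h

lemma ev_pow {p : PowerSeries ℂ} {z : ℂ} (hp : Sm p ‖z‖) (n : ℕ) : ev (p ^ n) z = ev p z ^ n := by
  induction n with
  | zero => simpa using ev_one z
  | succ n ih => rw [pow_succ, ev_mul (hp.pow (norm_nonneg _) n) hp, ih, pow_succ]

lemma sumbound {N β : ℝ} (hN : 1 ≤ N) (hβ : 0 ≤ β) (hβ1 : β ≤ 1) :
    Summable (fun n : ℕ => (n : ℝ) ^ β * (1 - 1 / N) ^ n) ∧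
    ∑' n : ℕ, (n : ℝ) ^ β * (1 - 1 / N) ^ n ≤ 2 * (N ^ β * N) := by
  have hN0 : 0 < N := by linarith
  set x := 1 - 1 / N with hx
  have hx0 : 0 ≤ x := by
    rw [hx, sub_nonneg, div_le_one hN0]; exact hN
  have hx1 : x < 1 := by
    have : 0 < 1 / N := by positivity
    linarith
  have hs : HasSum (fun n : ℕ => N ^ β * (x ^ n + 1 / N * (n * x ^ n)))
      (N ^ β * ((1 - x)⁻¹ + 1 / N * (x / (1 - x) ^ 2))) :=
    ((hasSum_geometric_of_lt_one hx0 hx1).add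
      ((hasSum_coe_mul_geometric_of_norm_lt_one
        (by rw [Real.norm_eq_abs, abs_of_nonneg hx0]; exact hx1)).mul_left (1 / N))).mul_left _
  have hle : ∀ n : ℕ, (n : ℝ) ^ β * x ^ n ≤ N ^ β * (x ^ n + 1 / N * (n * x ^ n)) := by
    intro n
    have h1 : ((n : ℝ) / N) ^ β ≤ 1 + n / N := by
      have hn : 0 ≤ (n : ℝ) / N := by positivity
      rcases le_total ((n : ℝ) / N) 1 with h | h
      · have := Real.rpow_le_one hn h hβ
        linarith
      · have := Real.rpow_le_rpow_of_exponent_le h hβ1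
        rw [Real.rpow_one] at this
        linarith
    have h2 : (n : ℝ) ^ β = N ^ β * ((n : ℝ) / N) ^ β := by
      rw [← Real.mul_rpow hN0.le (by positivity)]
      congr 1; field_simp
    rw [h2]
    calc N ^ β * ((n : ℝ) / N) ^ β * x ^ n ≤ N ^ β * (1 + n / N) * x ^ n := by gcongr
      _ = _ := by ring
  have hsum : Summable (fun n : ℕ => (n : ℝ) ^ β * x ^ n) :=
    Summable.of_nonneg_of_le (fun n => by positivity) hle hs.summable
  refine ⟨hsum, ?_⟩
  refine hsum.tsum_le_of_sum_le ?_
  intro S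
  calc _ ≤ ∑ n ∈ S, N ^ β * (x ^ n + 1 / N * (n * x ^ n)) := Finset.sum_le_sum fun n _ => hle n
    _ ≤ _ := sum_le_hasSum S (fun n _ => by positivity) hs
    _ ≤ _ := by
      have : 1 - x = 1 / N := by rw [hx]; ring
      rw [this]
      have h4 : (1 / N)⁻¹ + 1 / N * (x / (1 / N) ^ 2) = (1 + x) * N := by field_simp
      rw [h4]
      have h5 : (1 + x) * N ≤ 2 * N := by gcongr; linarith
      calc _ ≤ N ^ β * (2 * N) := by gcongr
        _ = _ := by ring

lemma kernel_bound {δ : ℝ} (hδ : 0 < δ) (hδ1 : δ < 1) : ∃ B : ℝ, 0 < B ∧ ∀ N ρ : ℝ, 2 ≤ N →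
    0 ≤ ρ → ρ ^ 2 = 1 - 1 / N → ∫ t : UnitAddCircle, 1 / ‖1 - zz ρ t‖ ≤ B * N ^ δ := by
  have hI1 : IntervalIntegrable (fun t : ℝ => t ^ (δ - 1)) volume 0 1 :=
    intervalIntegral.intervalIntegrable_rpow' (by linarith)
  have hI2 : IntervalIntegrable (fun t : ℝ => (1 - t) ^ (δ - 1)) volume 0 1 := by
    have := (hI1.comp_sub_left 1)
    simpa using this.symm
  set J := ∫ t in (0:ℝ)..1, (t ^ (δ - 1) + (1 - t) ^ (δ - 1)) with hJ
  have hJ0 : 0 ≤ J := by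
    apply intervalIntegral.integral_nonneg zero_le_one
    intro t ht
    have := ht.1; have := ht.2
    have : 0 ≤ 1 - t := by linarith
    positivity
  refine ⟨2 ^ δ * J + 1, by positivity, ?_⟩
  intro N ρ hN hρ hρN
  have hN0 : 0 < N := by linarith
  have h1N : 0 < 1 / N := by positivity
  have hρ1 : ρ < 1 := by nlinarith
  have hlow : 1 / (2 * N) ≤ 1 - ρ := by
    have : 1 / (2 * N) = (1 / N) / 2 := by field_simp
    rw [this]; nlinarith
  have hlow2 : ∀ t, 1 - ρ ≤ ‖1 - zz ρ t‖ := by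
    intro t
    have := norm_sub_norm_le (1 : ℂ) (zz ρ t)
    rw [norm_zz hρ, norm_one] at this
    exact this
  have hpt : ∀ t : ℝ, 0 < t → t < 1 → 1 / ‖1 - zz ρ (t : UnitAddCircle)‖ ≤
      2 ^ δ * N ^ δ * (t ^ (δ - 1) + (1 - t) ^ (δ - 1)) := by
    intro t ht0 ht1
    set D := ‖1 - zz ρ (t : UnitAddCircle)‖ with hD
    have hD1 : 1 - ρ ≤ D := hlow2 _
    have hD0 : 0 < D := by linarith
    have hD2 : min t (1 - t) ≤ D := by
      have e1 : fourier 1 (t : UnitAddCircle) = Complex.exp (Complex.I * ((2 * Real.pi * t : ℝ) : ℂ)) := by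
        rw [fourier_coe_apply]; congr 1; push_cast; ring
      have e2 : ‖fourier 1 (t : UnitAddCircle) - 1‖ = 2 * Real.sin (Real.pi * t) := by
        rw [e1, Complex.norm_exp_I_mul_ofReal_sub_one]
        have : 0 ≤ Real.sin (Real.pi * t) :=
          Real.sin_nonneg_of_nonneg_of_le_pi (by positivity) (by nlinarith [Real.pi_pos])
        rw [show 2 * Real.pi * t / 2 = Real.pi * t by ring, Real.norm_eq_abs, abs_of_nonneg (by positivity)]
      have e3 : ‖fourier 1 (t : UnitAddCircle) - 1‖ ≤ 2 * D := by
        have e4 : fourier 1 (t : UnitAddCircle) - 1 =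
            -(1 - zz ρ (t : UnitAddCircle)) + ((1 - ρ : ℝ) : ℂ) * fourier 1 (t : UnitAddCircle) := by
          simp only [zz]; push_cast; ring
        rw [e4]
        refine (norm_add_le _ _).trans ?_
        rw [norm_neg, norm_mul, fourier_apply, Circle.norm_coe, Complex.norm_real, Real.norm_eq_abs,
          abs_of_nonneg (by linarith)]
        linarith
      have e5 : 2 * min t (1 - t) ≤ Real.sin (Real.pi * t) := by
        rcases le_total t (1 / 2) with h | h
        · have := Real.mul_le_sin (x := Real.pi * t) (by positivity) (by nlinarith [Real.pi_pos])
          have e6 : 2 / Real.pi * (Real.pi * t) = 2 * t := by field_simp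
          rw [e6] at this
          exact (by gcongr; exact min_le_left _ _ : 2 * min t (1 - t) ≤ 2 * t).trans this
        · have h' : 0 ≤ 1 - t := by linarith
          have := Real.mul_le_sin (x := Real.pi * (1 - t)) (by positivity) (by nlinarith [Real.pi_pos])
          have e6 : 2 / Real.pi * (Real.pi * (1 - t)) = 2 * (1 - t) := by field_simp
          rw [e6, show Real.pi * (1 - t) = Real.pi - Real.pi * t by ring, Real.sin_pi_sub] at this
          exact (by gcongr; exact min_le_right _ _ : 2 * min t (1 - t) ≤ 2 * (1 - t)).trans this
      have e7 : 0 < min t (1 - t) := lt_min ht0 (by linarith)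
      linarith
    have hmin : 0 < min t (1 - t) := lt_min ht0 (by linarith)
    have h1 : 1 / D = (1 / D) ^ δ * D ^ (δ - 1) := by
      rw [Real.div_rpow zero_le_one hD0.le, Real.one_rpow, Real.rpow_sub_one hD0.ne']
      have := (Real.rpow_pos_of_pos hD0 δ).ne'
      field_simp
    rw [h1]
    have h2 : (1 / D) ^ δ ≤ 2 ^ δ * N ^ δ := by
      rw [← Real.mul_rpow (by norm_num) hN0.le]
      apply Real.rpow_le_rpow (by positivity) _ hδ.le
      rw [div_le_iff₀ hD0]
      have : 1 / (2 * N) ≤ D := hlow.trans hD1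
      rw [div_le_iff₀ (by positivity)] at this
      linarith
    have h3 : D ^ (δ - 1) ≤ t ^ (δ - 1) + (1 - t) ^ (δ - 1) := by
      have h4 : D ^ (δ - 1) ≤ (min t (1 - t)) ^ (δ - 1) :=
        Real.rpow_le_rpow_of_nonpos hmin hD2 (by linarith)
      have h5 : 0 ≤ t ^ (δ - 1) := by positivity
      have h6 : 0 ≤ (1 - t) ^ (δ - 1) := Real.rpow_nonneg (by linarith) _
      rcases min_choice t (1 - t) with h | h <;> rw [h] at h4 <;> linarith
    gcongr
  rw [← UnitAddCircle.intervalIntegral_preimage 0, zero_add]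
  have hcont : Continuous fun t : ℝ => 1 / ‖1 - zz ρ (t : UnitAddCircle)‖ := by
    apply Continuous.div continuous_const
    · have := (cont_zz ρ).comp (AddCircle.continuous_mk' (1 : ℝ))
      exact (continuous_const.sub this).norm
    · intro t
      have := hlow2 (t : UnitAddCircle)
      linarith
  calc _ ≤ ∫ t in (0:ℝ)..1, 2 ^ δ * N ^ δ * (t ^ (δ - 1) + (1 - t) ^ (δ - 1)) := by
        apply intervalIntegral.integral_mono_on_of_le_Ioo zero_le_one (hcont.intervalIntegrable _ _)
          ((hI1.add hI2).const_mul _)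
        intro t ht
        exact hpt t ht.1 ht.2
    _ = 2 ^ δ * N ^ δ * J := by rw [intervalIntegral.integral_const_mul]
    _ ≤ _ := by
      have : 0 ≤ N ^ δ := by positivity
      nlinarith
lemma integ {f : UnitAddCircle → ℝ} (hf : Continuous f) : Integrable f :=
  hf.integrable_of_hasCompactSupport (HasCompactSupport.of_compactSpace _)

lemma ident {R : PowerSeries ℂ} {e : ℕ → ℝ} {c : ℝ} (he0 : e 0 = 0)
    (hR0 : PowerSeries.coeff 0 R = 0)
    (hR : ∀ n, PowerSeries.coeff (n + 1) R = ((e (n + 1) - e n + c : ℝ) : ℂ)) {z : ℂ}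
    (hz : ‖z‖ < 1) (hSR : Sm R ‖z‖) (hSE : Sm (PowerSeries.mk fun n => (e n : ℂ)) ‖z‖) :
    ev R z = c * z / (1 - z) + (1 - z) * ev (PowerSeries.mk fun n => (e n : ℂ)) z := by
  set E := ev (PowerSeries.mk fun n => (e n : ℂ)) z with hE
  have h1 : HasSum (fun n => (e n : ℂ) * z ^ n) E := by
    simpa using hSE.hasSum
  have h2 : HasSum (fun n => (e (n + 1) : ℂ) * z ^ (n + 1)) E := by
    rw [← hasSum_nat_add_iff' 1] at h1
    simpa [he0] using h1
  have h3 : HasSum (fun n => PowerSeries.coeff (n + 1) R * z ^ (n + 1)) (ev R z) := by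
    have := hSR.hasSum
    rw [← hasSum_nat_add_iff' 1] at this
    simpa only [Finset.sum_range_one, hR0, zero_mul, sub_zero] using this
  have h4 := (h2.sub (h1.mul_left z)).add ((hasSum_geometric_of_norm_lt_one hz).mul_left (c * z))
  have h5 : HasSum (fun n => PowerSeries.coeff (n + 1) R * z ^ (n + 1))
      (E - z * E + c * z * (1 - z)⁻¹) := by
    refine h4.congr_fun fun n => ?_
    rw [hR]; push_cast; ring
  rw [h3.unique h5]; ring

lemma young {l y : ℝ} (hl : 0 ≤ l) (hy : 0 ≤ y) {s : ℕ} (hs : 2 ≤ s) :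
    l ^ (s - 2) * y ^ 2 ≤ l ^ s + y ^ s := by
  obtain ⟨k, rfl⟩ := Nat.exists_eq_add_of_le hs
  rw [Nat.add_sub_cancel_left, pow_add, pow_add]
  rcases le_total y l with h | h
  · have h1 : y ^ 2 ≤ l ^ 2 := by gcongr
    have h2 : l ^ k * y ^ 2 ≤ l ^ k * l ^ 2 := by gcongr
    have h3 : 0 ≤ y ^ 2 * y ^ k := by positivity
    linarith
  · have h1 : l ^ k ≤ y ^ k := by gcongr
    have h2 : l ^ k * y ^ 2 ≤ y ^ k * y ^ 2 := by gcongr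
    have h3 : 0 ≤ l ^ 2 * l ^ k := by positivity
    linarith

/-- the polynomial `1 + X + ... + X^(M-1)`. -/
noncomputable def geo (M : ℕ) : PowerSeries ℕ := PowerSeries.mk fun n => if n < M then 1 else 0

noncomputable abbrev cm (p : PowerSeries ℕ) : PowerSeries ℂ := p.map (Nat.castRingHom ℂ)

lemma coeff_cm (p : PowerSeries ℕ) (n : ℕ) :
    PowerSeries.coeff n (cm p) = ((PowerSeries.coeff n p : ℕ) : ℂ) := by simp [cm]

lemma geo_van (M : ℕ) : ∀ n, M ≤ n → PowerSeries.coeff n (cm (geo M)) = 0 := by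
  intro n hn
  rw [coeff_cm, geo, PowerSeries.coeff_mk, if_neg (by omega)]; simp

lemma ev_geo (M : ℕ) (z : ℂ) : ev (cm (geo M)) z = ∑ i ∈ Finset.range M, z ^ i := by
  rw [ev_fin M (geo_van M)]
  refine Finset.sum_congr rfl fun n hn => ?_
  rw [coeff_cm, geo, PowerSeries.coeff_mk, if_pos (Finset.mem_range.mp hn)]; simp

lemma ev_real {p : PowerSeries ℕ} {x : ℝ} (hx : 0 ≤ x) (h : Sm (cm p) x) :
    ∃ y : ℝ, 0 ≤ y ∧ ev (cm p) (x : ℂ) = y ∧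
      HasSum (fun n => ((PowerSeries.coeff n p : ℕ) : ℝ) * x ^ n) y := by
  have hs : Summable (fun n => ((PowerSeries.coeff n p : ℕ) : ℝ) * x ^ n) := by
    refine Summable.congr h fun n => ?_
    rw [coeff_cm]; simp
  refine ⟨_, tsum_nonneg fun n => by positivity, ?_, hs.hasSum⟩
  unfold ev
  push_cast
  simp_rw [coeff_cm]

/-- lower bound. -/
lemma lower (F : PowerSeries ℕ) {ρ x : ℝ} (hρ : 0 ≤ ρ) (hρ1 : ρ < 1) (hx : ρ ^ 2 = x)
    (hF : ∀ ρ : ℝ, 0 ≤ ρ → ρ < 1 → Sm (cm F) ρ) {s : ℕ} (hs : 2 ≤ s) (M : ℕ) (y : ℝ) (hy : 0 ≤ y)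
    (hyF : ev (cm F) (x : ℂ) = y) :
    (√(y / 2)) ^ s * (∑ i ∈ Finset.range M, x ^ i) ≤
      ∫ t : UnitAddCircle, ‖ev (cm (geo M)) (zz ρ t)‖ ^ 2 * ‖ev (cm F) (zz ρ t)‖ ^ s := by
  have hx0 : 0 ≤ x := hx ▸ sq_nonneg ρ
  have hx1 : x < 1 := by rw [← hx]; nlinarith
  have hG : ∀ ρ, Sm (cm (geo M)) ρ := fun ρ => Sm_fin M (geo_van M) ρ
  have hcG := (parseval_s5 hρ (hG ρ)).1
  have hcF := (parseval_s5 hρ (hF ρ hρ hρ1)).1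
  set p := ∑ i ∈ Finset.range M, x ^ i with hp
  have h1 : ∫ t : UnitAddCircle, ‖ev (cm (geo M)) (zz ρ t)‖ ^ 2 = p := by
    rw [← (parseval_s5 hρ (hG ρ)).2.tsum_eq]
    rw [tsum_eq_sum (s := Finset.range M)]
    · refine Finset.sum_congr rfl fun n hn => ?_
      rw [coeff_cm, geo, PowerSeries.coeff_mk, if_pos (Finset.mem_range.mp hn), hx]; simp
    · intro n hn
      rw [geo_van M n (by simpa using hn)]; simp
  have hnx : ‖(x : ℂ)‖ = x := by simp [abs_of_nonneg hx0]
  have h2 : p * y ≤ ∫ t : UnitAddCircle, ‖ev (cm (geo M)) (zz ρ t)‖ ^ 2 * ‖ev (cm F) (zz ρ t)‖ ^ 2 := by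
    have hmul : cm (geo M * F) = cm (geo M) * cm F := by simp [cm]
    have hS : ∀ ρ : ℝ, 0 ≤ ρ → ρ < 1 → Sm (cm (geo M * F)) ρ := by
      intro ρ h h'
      rw [hmul]; exact (hG ρ).mul h (hF ρ h h')
    obtain ⟨w, hw0, hw, hws⟩ := ev_real hx0 (hS x hx0 hx1)
    have hwe : w = p * y := by
      rw [hmul, ev_mul (hG _) (by rw [hnx]; exact hF x hx0 hx1), hyF, ev_geo] at hw
      rw [hp]
      exact_mod_cast hw.symm
    have h3 := (parseval_s5 hρ (hS ρ hρ hρ1)).2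
    have h4 : ∀ t, ‖ev (cm (geo M * F)) (zz ρ t)‖ ^ 2 =
        ‖ev (cm (geo M)) (zz ρ t)‖ ^ 2 * ‖ev (cm F) (zz ρ t)‖ ^ 2 := by
      intro t
      rw [hmul, ev_mul (hG _) (by rw [norm_zz hρ]; exact hF ρ hρ hρ1), norm_mul, mul_pow]
    simp_rw [h4] at h3
    rw [← hwe]
    refine hasSum_le (fun n => ?_) hws h3
    rw [hx, coeff_cm]
    gcongr
    rw [Complex.norm_natCast]
    exact_mod_cast Nat.le_self_pow two_ne_zero _
  set l := √(y / 2) with hl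
  have hl0 : 0 ≤ l := Real.sqrt_nonneg _
  have hl2 : 2 * l ^ 2 = y := by rw [hl, Real.sq_sqrt (by positivity)]; ring
  have h5 : l ^ (s - 2) * ∫ t : UnitAddCircle, ‖ev (cm (geo M)) (zz ρ t)‖ ^ 2 * ‖ev (cm F) (zz ρ t)‖ ^ 2
      ≤ l ^ s * p + ∫ t : UnitAddCircle, ‖ev (cm (geo M)) (zz ρ t)‖ ^ 2 * ‖ev (cm F) (zz ρ t)‖ ^ s := by
    rw [← h1, ← integral_const_mul, ← integral_const_mul, ← integral_add]
    · apply integral_mono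
      · exact integ (by fun_prop)
      · exact integ (by fun_prop)
      · intro t
        have := young hl0 (norm_nonneg (ev (cm F) (zz ρ t))) hs
        have h6 := mul_le_mul_of_nonneg_left this (sq_nonneg ‖ev (cm (geo M)) (zz ρ t)‖)
        simp only
        linarith
    · exact integ (by fun_prop)
    · exact integ (by fun_prop)
  have h6 : l ^ (s - 2) * (p * y) = 2 * (l ^ s * p) := by
    obtain ⟨k, rfl⟩ := Nat.exists_eq_add_of_le hs
    rw [Nat.add_sub_cancel_left, ← hl2, pow_add]; ring
  have h7 := mul_le_mul_of_nonneg_left h2 (pow_nonneg hl0 (s - 2))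
  linarith

/-- upper bound. -/
lemma upper {R E : PowerSeries ℂ} {c ρ τ I1 I2 p x : ℝ} (hc : 0 ≤ c) (hρ : 0 ≤ ρ) (hρ1 : ρ < 1)
    (hx : ρ ^ 2 = x) (hτ : 0 < τ) (M : ℕ) (hR : Sm R ρ) (hE : Sm E ρ)
    (hid : ∀ t, ev R (zz ρ t) = c * (zz ρ t) / (1 - zz ρ t) + (1 - zz ρ t) * ev E (zz ρ t))
    (hI1 : ∫ t : UnitAddCircle, 1 / ‖1 - zz ρ t‖ ≤ I1)
    (hI2 : ∫ t : UnitAddCircle, ‖ev E (zz ρ t)‖ ^ 2 ≤ I2)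
    (hp : p = ∑ i ∈ Finset.range M, x ^ i) :
    ∫ t : UnitAddCircle, ‖ev (cm (geo M)) (zz ρ t)‖ ^ 2 * ‖ev R (zz ρ t)‖ ≤
      c * M ^ 2 * I1 + τ * p + 1 / τ * I2 := by
  have hG : ∀ ρ, Sm (cm (geo M)) ρ := fun ρ => Sm_fin M (geo_van M) ρ
  have hcG := (parseval_s5 hρ (hG ρ)).1
  have hcR := (parseval_s5 hρ hR).1
  have hcE := (parseval_s5 hρ hE).1
  have h1 : ∫ t : UnitAddCircle, ‖ev (cm (geo M)) (zz ρ t)‖ ^ 2 = p := by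
    rw [← (parseval_s5 hρ (hG ρ)).2.tsum_eq]
    rw [tsum_eq_sum (s := Finset.range M), hp]
    · refine Finset.sum_congr rfl fun n hn => ?_
      rw [coeff_cm, geo, PowerSeries.coeff_mk, if_pos (Finset.mem_range.mp hn), hx]; simp
    · intro n hn
      rw [geo_van M n (by simpa using hn)]; simp
  have hne : ∀ t, 1 - zz ρ t ≠ 0 := by
    intro t h
    have : ‖zz ρ t‖ = 1 := by rw [← sub_eq_zero.mp h]; simp
    rw [norm_zz hρ] at this
    linarith
  have hcz := cont_zz ρ
  have hck : Continuous fun t => 1 / ‖1 - zz ρ t‖ := by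
    apply Continuous.div continuous_const (by fun_prop)
    intro t; simpa using hne t
  have hpt : ∀ t, ‖ev (cm (geo M)) (zz ρ t)‖ ^ 2 * ‖ev R (zz ρ t)‖ ≤
      c * M ^ 2 * (1 / ‖1 - zz ρ t‖) + τ * ‖ev (cm (geo M)) (zz ρ t)‖ ^ 2
        + 1 / τ * ‖ev E (zz ρ t)‖ ^ 2 := by
    intro t
    rw [hid, ev_geo]
    set z := zz ρ t with hz
    have hzn : ‖z‖ ≤ 1 := by rw [hz, norm_zz hρ]; exact hρ1.le
    set P := ∑ i ∈ Finset.range M, z ^ i with hP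
    have hPM : ‖P‖ ≤ M := by
      refine (norm_sum_le _ _).trans ?_
      calc _ ≤ ∑ i ∈ Finset.range M, (1 : ℝ) := by
            refine Finset.sum_le_sum fun i _ => ?_
            rw [norm_pow]; exact pow_le_one₀ (norm_nonneg _) hzn
        _ = M := by simp
    have hPz : ‖P‖ * ‖1 - z‖ ≤ 2 := by
      rw [← norm_mul, hP, geom_sum_mul_neg]
      refine (norm_sub_le _ _).trans ?_
      have : ‖z ^ M‖ ≤ 1 := by rw [norm_pow]; exact pow_le_one₀ (norm_nonneg _) hzn
      rw [norm_one]; linarith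
    have hD0 : 0 < ‖1 - z‖ := norm_pos_iff.mpr (hne t)
    set e := ‖ev E z‖ with he
    have he0 : 0 ≤ e := norm_nonneg _
    have ha : ‖c * z / (1 - z) + (1 - z) * ev E z‖ ≤ c * (1 / ‖1 - z‖) + ‖1 - z‖ * e := by
      refine (norm_add_le _ _).trans ?_
      rw [norm_mul (1 - z), norm_div, norm_mul, Complex.norm_real, Real.norm_eq_abs, abs_of_nonneg hc]
      have : c * ‖z‖ / ‖1 - z‖ ≤ c * (1 / ‖1 - z‖) := by
        rw [mul_div_assoc]; gcongr
      linarith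
    have hb : 2 * ‖P‖ * e ≤ τ * ‖P‖ ^ 2 + 1 / τ * e ^ 2 := by
      have h : 0 ≤ 1 / τ * (τ * ‖P‖ - e) ^ 2 := by positivity
      have h' : 1 / τ * (τ * ‖P‖ - e) ^ 2 = τ * ‖P‖ ^ 2 + 1 / τ * e ^ 2 - 2 * ‖P‖ * e := by
        field_simp; ring
      linarith
    calc _ ≤ ‖P‖ ^ 2 * (c * (1 / ‖1 - z‖) + ‖1 - z‖ * e) := by gcongr
      _ = c * ‖P‖ ^ 2 * (1 / ‖1 - z‖) + (‖P‖ * ‖1 - z‖) * (‖P‖ * e) := by ring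
      _ ≤ c * M ^ 2 * (1 / ‖1 - z‖) + 2 * (‖P‖ * e) := by gcongr
      _ ≤ _ := by linarith
  calc _ ≤ ∫ t : UnitAddCircle, (c * M ^ 2 * (1 / ‖1 - zz ρ t‖) + τ * ‖ev (cm (geo M)) (zz ρ t)‖ ^ 2
        + 1 / τ * ‖ev E (zz ρ t)‖ ^ 2) := by
        apply integral_mono
        · exact integ (by fun_prop)
        · exact integ (by fun_prop)
        · exact hpt
    _ = c * M ^ 2 * (∫ t : UnitAddCircle, 1 / ‖1 - zz ρ t‖) + τ * p +
        1 / τ * ∫ t : UnitAddCircle, ‖ev E (zz ρ t)‖ ^ 2 := by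
        rw [integral_add, integral_add, integral_const_mul, integral_const_mul, integral_const_mul, h1]
        all_goals exact integ (by fun_prop)
    _ ≤ _ := by gcongr
lemma core (F : PowerSeries ℕ) (e : ℕ → ℝ) {c ε K : ℝ} (hc : 0 < c) (hε : 0 < ε) (hε1 : ε ≤ 1 / 8)
    {s : ℕ} (hs : 2 ≤ s) (hF : ∀ ρ : ℝ, 0 ≤ ρ → ρ < 1 → Sm (cm F) ρ) (he0 : e 0 = 0)
    (hR0 : PowerSeries.coeff 0 (cm F ^ s) = 0)
    (hR : ∀ n, PowerSeries.coeff (n + 1) (cm F ^ s) = ((e (n + 1) - e n + c : ℝ) : ℂ))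
    (hK : 0 ≤ K) (he : ∀ n, |e n| ≤ K * (n : ℝ) ^ (1 / 4 - ε)) : False := by
  set α := 1 / 4 - ε with hα
  have hα0 : 0 < α := by linarith
  obtain ⟨B, hB0, hB⟩ := kernel_bound (δ := ε / 2) (by linarith) (by linarith)
  set E : PowerSeries ℂ := PowerSeries.mk fun n => (e n : ℂ) with hE
  have hcE : ∀ n, ‖PowerSeries.coeff n E‖ = |e n| := by
    intro n; simp [hE]
  have hSE : ∀ ρ : ℝ, 0 ≤ ρ → ρ < 1 → Sm E ρ := by
    intro ρ h0 h1
    have h2 : 0 < 1 - ρ := by linarith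
    have h3 := (sumbound (N := 1 / (1 - ρ)) (β := α) (by rw [le_div_iff₀ h2]; linarith) hα0.le
      (by linarith)).1.mul_left K
    simp only [one_div_one_div, sub_sub_cancel] at h3
    refine Summable.of_nonneg_of_le (fun n => by positivity) (fun n => ?_) h3
    rw [hcE, ← mul_assoc]
    gcongr
    exact he n
  have hSR : ∀ ρ : ℝ, 0 ≤ ρ → ρ < 1 → Sm (cm F ^ s) ρ := fun ρ h h' => (hF ρ h h').pow h s
  set c1 := √(c / 4 / 2 ^ s) with hc1
  have hc10 : 0 < c1 := Real.sqrt_pos.mpr (by positivity)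
  -- choose N
  have ev1 := (tendsto_rpow_atTop (show 0 < 1 - α by linarith)).eventually_ge_atTop (8 * K / c)
  have ev2 := (tendsto_rpow_atTop (show 0 < ε / 2 by linarith)).eventually_gt_atTop
    ((c * B + 4 * K ^ 2 / c1) / (c1 / 8))
  obtain ⟨N, hN1, hN2, hN4⟩ := (ev1.and (ev2.and (Filter.eventually_ge_atTop (4 : ℝ)))).exists
  have hN0 : 0 < N := by linarith
  set x := 1 - 1 / N with hx
  have hx0 : 0 ≤ x := by
    rw [hx, sub_nonneg, div_le_one hN0]; linarith
  have hx1 : x < 1 := by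
    have : 0 < 1 / N := by positivity
    linarith
  set ρ := √x with hρdef
  have hρ : 0 ≤ ρ := Real.sqrt_nonneg _
  have hρ2 : ρ ^ 2 = x := Real.sq_sqrt hx0
  have hρ1 : ρ < 1 := by nlinarith
  set M := ⌊N ^ (1 / 2 - ε)⌋₊ with hM
  have hpow1 : 1 ≤ N ^ (1 / 2 - ε) := Real.one_le_rpow (by linarith) (by linarith)
  have hMle : (M : ℝ) ≤ N ^ (1 / 2 - ε) := Nat.floor_le (by positivity)
  have hMge : N ^ (1 / 2 - ε) / 2 ≤ M := by
    have h1 : (1 : ℝ) ≤ M := by exact_mod_cast (Nat.one_le_floor_iff _).mpr hpow1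
    have h2 := Nat.lt_floor_add_one (N ^ (1 / 2 - ε))
    linarith
  have hsq : √N * √N = N := Real.mul_self_sqrt hN0.le
  have hsq2 : 2 ≤ √N := by
    rw [Real.le_sqrt (by norm_num) hN0.le]; linarith
  have hMN : (M : ℝ) ≤ N / 2 := by
    have h1 : N ^ (1 / 2 - ε) ≤ √N := by
      rw [Real.sqrt_eq_rpow]
      exact Real.rpow_le_rpow_of_exponent_le (by linarith) (by linarith)
    nlinarith
  set p := ∑ i ∈ Finset.range M, x ^ i with hp
  have hpM : (M : ℝ) / 2 ≤ p := by
    calc (M : ℝ) / 2 = ∑ i ∈ Finset.range M, (1 / 2 : ℝ) := by simp; ring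
      _ ≤ p := by
        refine Finset.sum_le_sum fun i hi => ?_
        have h1 := one_add_mul_le_pow (a := -(1 / N)) (by
          have : 1 / N ≤ 1 := by rw [div_le_one hN0]; linarith
          linarith) i
        rw [← sub_eq_add_neg] at h1
        have hi' : (i : ℝ) ≤ M := by exact_mod_cast (Finset.mem_range.mp hi).le
        have h2 : (i : ℝ) * (1 / N) ≤ 1 / 2 := by
          rw [mul_one_div, div_le_iff₀ hN0]; linarith
        linarith
  obtain ⟨y, hy0, hy, -⟩ := ev_real hx0 (hF x hx0 hx1)
  have hnx : ‖(x : ℂ)‖ = x := by simp [abs_of_nonneg hx0]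
  -- lower bound on y ^ s
  have hEx : ‖ev E x‖ ≤ K * (2 * (N ^ α * N)) := by
    have hsb := sumbound (N := N) (β := α) (by linarith) hα0.le (by linarith)
    have h1 : ∀ n : ℕ, ‖PowerSeries.coeff n E * (x : ℂ) ^ n‖ ≤ K * ((n : ℝ) ^ α * x ^ n) := by
      intro n
      rw [norm_mul, norm_pow, hnx, hcE, ← mul_assoc]
      gcongr
      exact he n
    calc ‖ev E x‖ ≤ ∑' n : ℕ, K * ((n : ℝ) ^ α * x ^ n) :=
          tsum_of_norm_bounded (hsb.1.mul_left K).hasSum h1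
      _ = K * ∑' n : ℕ, ((n : ℝ) ^ α * x ^ n) := tsum_mul_left
      _ ≤ _ := by gcongr; exact hsb.2
  have hys : c / 4 * N ≤ y ^ s := by
    have h1 := ident he0 hR0 hR (z := (x : ℂ)) (by rw [hnx]; exact hx1)
      (by rw [hnx]; exact hSR x hx0 hx1) (by rw [hnx]; exact hSE x hx0 hx1)
    rw [ev_pow (by rw [hnx]; exact hF x hx0 hx1), hy] at h1
    have h2 : ((y ^ s : ℝ) : ℂ) - ((c * x / (1 - x) : ℝ) : ℂ) = ((1 - x : ℝ) : ℂ) * ev E x := by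
      push_cast; rw [h1]; ring
    have h3 := congrArg norm h2
    have h1x : 1 - x = 1 / N := by rw [hx]; ring
    rw [← Complex.ofReal_sub, Complex.norm_real, norm_mul, Complex.norm_real, Real.norm_eq_abs,
      Real.norm_eq_abs, h1x, abs_of_pos (show 0 < 1 / N by positivity)] at h3
    have h4 : c * x / (1 / N) = c * (N - 1) := by rw [hx]; field_simp
    rw [h4] at h3
    have h5 : 1 / N * ‖ev E x‖ ≤ 2 * K * N ^ α := by
      calc _ ≤ 1 / N * (K * (2 * (N ^ α * N))) := by gcongr
        _ = _ := by field_simp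
    have h6 : 2 * K * N ^ α ≤ c / 4 * N := by
      have h7 : N ^ (1 - α) * N ^ α = N := by
        rw [← Real.rpow_add hN0]; simp
      have h8 : 8 * K / c * N ^ α ≤ N := by
        calc _ ≤ N ^ (1 - α) * N ^ α := by gcongr
          _ = N := h7
      have h9 : 2 * K * N ^ α = c / 4 * (8 * K / c * N ^ α) := by field_simp; ring
      rw [h9]; gcongr
    have h10 := neg_abs_le (y ^ s - c * (N - 1))
    have h11 : c * 4 ≤ c * N := by gcongr
    linarith
  set L := √(y / 2) ^ s with hL
  have hL1 : c1 * √N ≤ L := by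
    have h1 : (c1 * √N) ^ 2 ≤ L ^ 2 := by
      rw [mul_pow, Real.sq_sqrt hN0.le, hc1, Real.sq_sqrt (by positivity), hL, ← pow_mul,
        mul_comm s 2, pow_mul, Real.sq_sqrt (by positivity), div_pow, div_mul_eq_mul_div]
      gcongr
    exact (pow_le_pow_iff_left₀ (by positivity) (by positivity) two_ne_zero).mp h1
  -- integral bounds
  have hlow := lower F hρ hρ1 hρ2 hF hs M y hy0 hy
  have hI2 : ∫ t : UnitAddCircle, ‖ev E (zz ρ t)‖ ^ 2 ≤ K ^ 2 * (2 * (N ^ (2 * α) * N)) := by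
    have hsb := sumbound (N := N) (β := 2 * α) (by linarith) (by linarith) (by linarith)
    have h1 := (parseval_s5 hρ (hSE ρ hρ hρ1)).2
    refine (hasSum_le (fun n => ?_) h1 (hsb.1.mul_left (K ^ 2)).hasSum).trans ?_
    · rw [hρ2, hcE, ← mul_assoc]
      gcongr
      calc |e n| ^ 2 ≤ (K * (n : ℝ) ^ α) ^ 2 := by gcongr; exact he n
        _ = _ := by
          rw [mul_pow, ← Real.rpow_natCast ((n : ℝ) ^ α), ← Real.rpow_mul (by positivity)]
          congr 2; push_cast; ring
    · rw [tsum_mul_left]; gcongr; exact hsb.2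
  set τ := c1 * √N / 2 with hτ
  have hτ0 : 0 < τ := by positivity
  have hup := upper (R := cm F ^ s) (E := E) hc.le hρ hρ1 hρ2 hτ0 M (hSR ρ hρ hρ1) (hSE ρ hρ hρ1)
    (fun t => ident he0 hR0 hR (by rw [norm_zz hρ]; exact hρ1)
      (by rw [norm_zz hρ]; exact hSR ρ hρ hρ1) (by rw [norm_zz hρ]; exact hSE ρ hρ hρ1))
    (hB N ρ (by linarith) hρ hρ2) hI2 hp
  have hpw : ∀ t, ev (cm F ^ s) (zz ρ t) = ev (cm F) (zz ρ t) ^ s := fun t =>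
    ev_pow (by rw [norm_zz hρ]; exact hF ρ hρ hρ1) s
  simp_rw [hpw, norm_pow] at hup
  have hfin := hlow.trans hup
  have hp0 : 0 ≤ p := le_trans (by positivity) hpM
  have h1 : 2 * τ * p ≤ L * p := by
    gcongr; rw [hτ]; linarith
  have h2 : τ * (M / 2) ≤ τ * p := by gcongr
  have h3 : τ * (N ^ (1 / 2 - ε) / 2 / 2) ≤ τ * (M / 2) := by gcongr
  have h4 : τ * (N ^ (1 / 2 - ε) / 2 / 2) = c1 / 8 * N ^ (1 - ε) := by
    rw [hτ, Real.sqrt_eq_rpow, show (1 - ε) = 1 / 2 + (1 / 2 - ε) by ring, Real.rpow_add hN0]; ring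
  have h5 : c * (M : ℝ) ^ 2 * (B * N ^ (ε / 2)) ≤ c * B * N ^ (1 - 3 * ε / 2) := by
    calc _ ≤ c * (N ^ (1 / 2 - ε)) ^ 2 * (B * N ^ (ε / 2)) := by gcongr
      _ = c * B * (N ^ (1 / 2 - ε) * N ^ (1 / 2 - ε) * N ^ (ε / 2)) := by ring
      _ = _ := by
        rw [← Real.rpow_add hN0, ← Real.rpow_add hN0]; congr 2; ring
  have h6 : 1 / τ * (K ^ 2 * (2 * (N ^ (2 * α) * N))) ≤ 4 * K ^ 2 / c1 * N ^ (1 - 3 * ε / 2) := by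
    have h7 : N ^ (2 * α) * N = √N * N ^ (1 - 2 * ε) := by
      rw [Real.sqrt_eq_rpow, ← Real.rpow_add hN0]
      nth_rewrite 2 [← Real.rpow_one N]
      rw [← Real.rpow_add hN0, hα]; congr 1; ring
    have h8 : 1 / τ * (K ^ 2 * (2 * (N ^ (2 * α) * N))) = 4 * K ^ 2 / c1 * N ^ (1 - 2 * ε) := by
      rw [h7, hτ]; field_simp; ring
    rw [h8]
    gcongr 4 * K ^ 2 / c1 * ?_
    exact Real.rpow_le_rpow_of_exponent_le (by linarith) (by linarith)
  have h9 : c1 / 8 * N ^ (1 - ε) ≤ (c * B + 4 * K ^ 2 / c1) * N ^ (1 - 3 * ε / 2) := by linarith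
  have h10 : N ^ (1 - ε) = N ^ (ε / 2) * N ^ (1 - 3 * ε / 2) := by
    rw [← Real.rpow_add hN0]; congr 1; ring
  rw [h10, ← mul_assoc] at h9
  have h11 := le_of_mul_le_mul_right h9 (by positivity)
  rw [div_lt_iff₀ (by positivity)] at hN2
  linarith
open Classical in
/-- generating function of `k • A`. -/
noncomputable def gen (A : Set ℕ) (k : ℕ) : PowerSeries ℕ :=
  PowerSeries.mk fun n => if ∃ a ∈ A, n = k * a then 1 else 0

lemma coeff_gen_prod (A : Set ℕ) (r : ℕ) (k m : Fin r → ℕ) (hk : ∀ i, 0 < k i) (n : ℕ) :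
    PowerSeries.coeff n (∏ i, gen A (k i) ^ m i) = reprFn A r k m n := by
  classical
  have h1 : ∏ i, gen A (k i) ^ m i = ∏ x : (Σ i : Fin r, Fin (m i)), gen A (k x.1) := by
    rw [← Finset.univ_sigma_univ, Finset.prod_sigma]
    simp
  rw [h1, PowerSeries.coeff_prod]
  have h2 : ∀ l : (Σ i : Fin r, Fin (m i)) →₀ ℕ,
      ∏ x, PowerSeries.coeff (l x) (gen A (k x.1)) =
        if ∀ x, ∃ a ∈ A, l x = k x.1 * a then 1 else 0 := by
    intro l
    simp only [gen, PowerSeries.coeff_mk]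
    rw [Finset.prod_ite_zero]
    simp
  simp_rw [h2]
  rw [← Finset.sum_filter, Finset.sum_const, smul_eq_mul, mul_one, reprFn]
  rw [← Nat.card_eq_finsetCard]
  symm
  let g : ((i : Fin r) → Fin (m i) → ℕ) → ((Σ i : Fin r, Fin (m i)) →₀ ℕ) := fun a =>
    Finsupp.equivFunOnFinite.symm (fun x => k x.1 * a x.1 x.2)
  have hg : ∀ a x, g a x = k x.1 * a x.1 x.2 := fun a x => rfl
  have hsum : ∀ a, ∑ x, g a x = ∑ i, k i * ∑ j, a i j := by
    intro a
    simp_rw [hg]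
    rw [← Finset.univ_sigma_univ, Finset.sum_sigma]
    simp_rw [Finset.mul_sum]
  refine Nat.card_eq_of_bijective (fun a => ⟨g a.1, ?_⟩) ⟨?_, ?_⟩
  · rw [Finset.mem_filter, Finset.mem_finsuppAntidiag]
    refine ⟨⟨?_, by simp⟩, fun x => ⟨a.1 x.1 x.2, a.2.1 _ _, rfl⟩⟩
    rw [hsum]; exact a.2.2.symm
  · intro a b hab
    have h : g a.1 = g b.1 := congrArg Subtype.val hab
    ext i j
    have h' := DFunLike.congr_fun h ⟨i, j⟩
    rw [hg, hg] at h'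
    exact Nat.eq_of_mul_eq_mul_left (hk i) h'
  · rintro ⟨l, hl⟩
    rw [Finset.mem_filter, Finset.mem_finsuppAntidiag] at hl
    obtain ⟨⟨hl1, -⟩, hl2⟩ := hl
    choose a ha hla using hl2
    have hga : g (fun i j => a ⟨i, j⟩) = l := by
      ext x; exact (hg (fun i j => a ⟨i, j⟩) x).trans (hla x).symm
    refine ⟨⟨fun i j => a ⟨i, j⟩, fun i j => ha _, ?_⟩, Subtype.ext hga⟩
    rw [← hsum, hga]; exact hl1.symm

lemma Sm_gen (A : Set ℕ) (k : ℕ) {ρ : ℝ} (h0 : 0 ≤ ρ) (h1 : ρ < 1) : Sm (cm (gen A k)) ρ := by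
  classical
  refine Summable.of_nonneg_of_le (fun n => by positivity) (fun n => ?_)
    (summable_geometric_of_lt_one h0 h1)
  rw [coeff_cm, gen, PowerSeries.coeff_mk]
  split_ifs
  · simp
  · simp; positivity

theorem stmt5 (A : Set ℕ) (hA : A.Infinite) (hApos : ∀ a ∈ A, 0 < a)
    (r : ℕ) (hr : 1 ≤ r) (k m : Fin r → ℕ)
    (hk : ∀ i, 0 < k i) (hkmono : StrictMono k) (hm : ∀ i, 0 < m i)
    (s : ℕ) (hs : s = Finset.univ.gcd m) (hs2 : 2 ≤ s)
    (c : ℝ) (hc : 0 < c) (ε : ℝ) (hε : 0 < ε) :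
    ¬ ∃ K : ℝ, ∀ n : ℕ, 1 ≤ n →
      |∑ j ∈ Finset.Icc 1 n, ((reprFn A r k m j : ℝ) - c)| ≤
        K * (n : ℝ) ^ ((1 : ℝ) / 4 - ε) := by
  rintro ⟨K, hK⟩
  have hK0 : 0 ≤ K := by
    have := (abs_nonneg _).trans (hK 1 le_rfl)
    simpa using this
  have hdvd : ∀ i, s ∣ m i := fun i => hs ▸ Finset.gcd_dvd (Finset.mem_univ i)
  set F : PowerSeries ℕ := ∏ i, gen A (k i) ^ (m i / s) with hF
  have hFs : F ^ s = ∏ i, gen A (k i) ^ m i := by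
    rw [hF, ← Finset.prod_pow]
    refine Finset.prod_congr rfl fun i _ => ?_
    rw [← pow_mul, Nat.div_mul_cancel (hdvd i)]
  have hcoef : ∀ n, PowerSeries.coeff n (cm F ^ s) = (reprFn A r k m n : ℂ) := by
    intro n
    rw [← map_pow, coeff_cm, hFs, coeff_gen_prod A r k m hk]
  have hr0 : reprFn A r k m 0 = 0 := by
    rw [reprFn, Nat.card_eq_zero]
    left
    refine ⟨fun ⟨a, ha, h0⟩ => ?_⟩
    have i : Fin r := ⟨0, hr⟩
    have j : Fin (m i) := ⟨0, hm i⟩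
    have h1 := (Finset.sum_eq_zero_iff.mp h0.symm) i (Finset.mem_univ i)
    rcases Nat.mul_eq_zero.mp h1 with h | h
    · exact (hk i).ne' h
    · have h2 := (Finset.sum_eq_zero_iff.mp h) j (Finset.mem_univ j)
      exact (hApos _ (ha i j)).ne' h2
  refine core F (fun n => ∑ j ∈ Finset.Icc 1 n, ((reprFn A r k m j : ℝ) - c)) (c := c)
    (ε := min ε (1 / 8)) (K := K) hc (lt_min hε (by norm_num)) (min_le_right _ _) hs2 ?_ (by simp)
    ?_ ?_ hK0 ?_
  · intro ρ h0 h1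
    have : cm F = ∏ i, cm (gen A (k i)) ^ (m i / s) := by
      rw [hF, cm, map_prod]; simp_rw [map_pow]
    rw [this]
    exact Sm.prod _ _ h0 fun i _ => (Sm_gen A (k i) h0 h1).pow h0 _
  · rw [hcoef, hr0]; simp
  · intro n
    rw [hcoef, Finset.sum_Icc_succ_top (by omega)]
    push_cast; ring
  · intro n
    rcases Nat.eq_zero_or_pos n with rfl | hn
    · simp; positivity
    · refine (hK n hn).trans ?_
      have h1 : (1 : ℝ) ≤ n := by exact_mod_cast hn
      have := min_le_left ε (1 / 8)
      gcongr
end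

section
/- Let s ≥ 1, d ≥ 0, m ≥ 1 and n ≥ 0 be integers, and let S, Q be polynomials with complex coefficients such that S is not the zero polynomial and Q(1) ≠ 0. If S(z)^s · (1−z)^{d+1} = Q(z) · (1−z^m)^{n·s} as polynomials, then s divides d+1. -/
theorem stmt8 (s d m n : ℕ) (hs : 1 ≤ s) (hm : 1 ≤ m)
    (S Q : Polynomial ℂ) (hS : S ≠ 0) (hQ : Q.eval 1 ≠ 0)
    (h : S ^ s * (1 - Polynomial.X) ^ (d + 1) =
        Q * (1 - Polynomial.X ^ m) ^ (n * s)) :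
    s ∣ (d + 1) := by
  have hX : (1 - Polynomial.X : Polynomial ℂ) = -(Polynomial.X - Polynomial.C 1) := by simp
  have h1 : (1 - Polynomial.X : Polynomial ℂ) ≠ 0 := by
    rw [hX]
    exact neg_ne_zero.mpr (Polynomial.X_sub_C_ne_zero 1)
  have hL : S ^ s * (1 - Polynomial.X) ^ (d + 1) ≠ 0 :=
    mul_ne_zero (pow_ne_zero _ hS) (pow_ne_zero _ h1)
  have hR := hL
  rw [h] at hR
  have hc := congrArg (fun p : Polynomial ℂ => p.roots.count 1) h
  have hq : Q.roots.count 1 = 0 := by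
    rw [Polynomial.count_roots]
    exact Polynomial.rootMultiplicity_eq_zero hQ
  have hx : (1 - Polynomial.X : Polynomial ℂ).roots.count 1 = 1 := by
    rw [hX, Polynomial.roots_neg, Polynomial.roots_X_sub_C]
    simp
  simp only [Polynomial.roots_mul hL, Polynomial.roots_mul hR, Polynomial.roots_pow,
    Multiset.count_add, Multiset.count_nsmul, hq, hx, zero_add, mul_one] at hc
  have hd : s ∣ s * Multiset.count 1 S.roots + (d + 1) := by
    rw [hc]
    exact (Dvd.intro_left n rfl).mul_right _
  exact (Nat.dvd_add_right (Dvd.intro _ rfl)).mp hd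
end

section
/- For every real r with 0 < r < 1, the average (1/2π)·∫_0^{2π} |1 − r·e^{iθ}|^{−1} dθ equals Σ_{n=0}^{∞} (4^{−n}·C(2n,n))^2 · r^{2n}, where C(2n,n) is the central binomial coefficient. -/
open Filter Topology MeasureTheory

/-- The coefficients of `(1 - z)^(-1/2)`. -/
noncomputable def cf (n : ℕ) : ℝ := (4 : ℝ)⁻¹ ^ n * (Nat.choose (2 * n) n : ℝ)

lemma cf_nonneg (n : ℕ) : 0 ≤ cf n := by unfold cf; positivity

lemma cf_le_one (n : ℕ) : cf n ≤ 1 := by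
  have h : ((Nat.centralBinom n : ℕ) : ℝ) ≤ 4 ^ n := by
    exact_mod_cast Nat.centralBinom_le_four_pow n
  rw [Nat.centralBinom_eq_two_mul_choose] at h
  unfold cf
  rw [inv_pow, inv_mul_le_iff₀ (by positivity)]
  simpa using h

lemma cf_succ (n : ℕ) : ((n : ℝ) + 1) * cf (n + 1) = (1 / 2 + n) * cf n := by
  have h : (((n + 1) * Nat.centralBinom (n + 1) : ℕ) : ℝ) =
      ((2 * (2 * n + 1) * Nat.centralBinom n : ℕ) : ℝ) :=
    congrArg _ (Nat.succ_mul_centralBinom_succ n)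
  rw [Nat.centralBinom_eq_two_mul_choose, Nat.centralBinom_eq_two_mul_choose] at h
  push_cast at h
  unfold cf
  rw [pow_succ]
  linear_combination (4 : ℝ)⁻¹ ^ n * 4⁻¹ * h

lemma asc_cf (n : ℕ) :
    (ascPochhammer ℂ n).eval (1 / 2 : ℂ) = (n.factorial : ℂ) * (cf n : ℂ) := by
  induction n with
  | zero => simp [cf]
  | succ k ih =>
    rw [ascPochhammer_succ_eval, ih, Nat.factorial_succ]
    have h : ((k : ℂ) + 1) * (cf (k + 1) : ℂ) = (1 / 2 + k) * cf k := by
      have h0 := congrArg (fun x : ℝ => (x : ℂ)) (cf_succ k)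
      push_cast at h0
      exact h0
    push_cast
    linear_combination - (k.factorial : ℂ) * h

lemma choose_cf (n : ℕ) : Ring.choose ((1 / 2 : ℂ) + n - 1) n = (cf n : ℂ) := by
  rw [← Ring.multichoose_eq]
  have h := Ring.factorial_nsmul_multichoose_eq_ascPochhammer (1 / 2 : ℂ) n
  rw [Polynomial.ascPochhammer_smeval_eq_eval, asc_cf, nsmul_eq_mul] at h
  exact mul_left_cancel₀ (by exact_mod_cast n.factorial_ne_zero) h

lemma hasSum_cf (z : ℂ) (hz : ‖z‖ < 1) :
    HasSum (fun n => (cf n : ℂ) * z ^ n) (1 / (1 - z) ^ (1 / 2 : ℂ)) := by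
  have h := (Complex.one_div_one_sub_cpow_hasFPowerSeriesOnBall_zero (1 / 2)).hasSum (y := z)
    (by simpa [enorm_eq_nnnorm, ← NNReal.coe_lt_coe] using hz)
  simpa only [FormalMultilinearSeries.ofScalars_apply_eq, choose_cf, smul_eq_mul, zero_add] using h

lemma norm_sq_val (z : ℂ) (hz : ‖z‖ < 1) :
    ‖1 / (1 - z) ^ (1 / 2 : ℂ)‖ ^ 2 = ‖1 - z‖⁻¹ := by
  rw [← norm_pow, div_pow, ← Complex.cpow_nat_mul]
  simp

/-- Partial sums. -/
noncomputable def pp (r : ℝ) (N : ℕ) : Polynomial ℂ :=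
  ∑ n ∈ Finset.range N, Polynomial.monomial n ((cf n * r ^ n : ℝ) : ℂ)

lemma pp_coeff (r : ℝ) (N i : ℕ) :
    (pp r N).coeff i = if i < N then ((cf i * r ^ i : ℝ) : ℂ) else 0 := by
  simp [pp, Polynomial.finset_sum_coeff, Polynomial.coeff_monomial]

lemma pp_eval (r : ℝ) (N : ℕ) (z : ℂ) :
    (pp r N).eval z = ∑ n ∈ Finset.range N, (cf n : ℂ) * (r * z) ^ n := by
  simp [pp, Polynomial.eval_finset_sum, mul_pow, mul_assoc]

lemma pp_parseval (r : ℝ) (N : ℕ) :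
    (2 * Real.pi)⁻¹ * ∫ θ in (0:ℝ)..(2 * Real.pi),
      ‖(pp r N).eval (Complex.exp (θ * Complex.I))‖ ^ 2 =
      ∑ n ∈ Finset.range N, (cf n) ^ 2 * r ^ (2 * n) := by
  have h := (pp r N).sum_sq_norm_coeff_eq_circleAverage
  rw [Real.circleAverage_def] at h
  simp only [circleMap, smul_eq_mul, Complex.ofReal_one, one_mul, zero_add] at h
  rw [← h]
  rw [Finset.sum_subset (s₂ := Finset.range N)]
  · refine Finset.sum_congr rfl fun n hn => ?_
    rw [pp_coeff, if_pos (Finset.mem_range.1 hn), Complex.norm_real, Real.norm_eq_abs, sq_abs]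
    ring
  · intro i hi
    by_contra hc
    rw [Polynomial.mem_support_iff, pp_coeff, if_neg (by simpa using hc)] at hi
    exact hi rfl
  · intro i _ hi
    simp [Polynomial.notMem_support_iff.1 hi]

theorem stmt9 (r : ℝ) (hr0 : 0 < r) (hr1 : r < 1) :
    (1 / (2 * Real.pi)) * ∫ θ in (0:ℝ)..(2 * Real.pi),
        (‖1 - (r : ℂ) * Complex.exp (θ * Complex.I)‖)⁻¹ =
      ∑' n : ℕ, ((4 : ℝ)⁻¹ ^ n * (Nat.choose (2 * n) n : ℝ)) ^ 2 * r ^ (2 * n) := by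
  have hz : ∀ θ : ℝ, ‖(r : ℂ) * Complex.exp (θ * Complex.I)‖ = r := fun θ => by
    rw [norm_mul, Complex.norm_exp_ofReal_mul_I, mul_one, Complex.norm_real,
      Real.norm_of_nonneg hr0.le]
  have hgeo := summable_geometric_of_lt_one hr0.le hr1
  have hs : Summable (fun n => (cf n) ^ 2 * r ^ (2 * n)) := by
    refine Summable.of_nonneg_of_le (fun n => by positivity) (fun n => ?_) hgeo
    have h1 : (cf n) ^ 2 ≤ 1 := pow_le_one₀ (cf_nonneg n) (cf_le_one n)
    have h2 : r ^ (2 * n) ≤ r ^ n := pow_le_pow_of_le_one hr0.le hr1.le (by omega)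
    calc _ ≤ 1 * r ^ n := mul_le_mul h1 h2 (by positivity) (by norm_num)
      _ = _ := one_mul _
  have hlim : Tendsto (fun N => ∫ θ in (0:ℝ)..(2 * Real.pi),
      ‖(pp r N).eval (Complex.exp (θ * Complex.I))‖ ^ 2) atTop
      (𝓝 (∫ θ in (0:ℝ)..(2 * Real.pi),
        (‖1 - (r : ℂ) * Complex.exp (θ * Complex.I)‖)⁻¹)) := by
    refine intervalIntegral.tendsto_integral_filter_of_dominated_convergence
      (fun _ => ((1 - r)⁻¹) ^ 2) ?_ ?_ ?_ ?_
    · refine Eventually.of_forall fun N => Continuous.aestronglyMeasurable ?_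
      fun_prop
    · refine Eventually.of_forall fun N => Eventually.of_forall fun θ _ => ?_
      rw [norm_pow, norm_norm]
      gcongr
      rw [pp_eval]
      calc _ ≤ ∑ n ∈ Finset.range N, r ^ n := by
            refine norm_sum_le_of_le _ fun n _ => ?_
            rw [norm_mul, norm_pow, hz, Complex.norm_real, Real.norm_of_nonneg (cf_nonneg n)]
            exact mul_le_of_le_one_left (by positivity) (cf_le_one n)
        _ ≤ ∑' n, r ^ n := hgeo.sum_le_tsum _ (fun n _ => by positivity)
        _ = _ := tsum_geometric_of_lt_one hr0.le hr1
    · exact intervalIntegrable_const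
    · refine Eventually.of_forall fun θ _ => ?_
      have hlt := (hz θ).trans_lt hr1
      rw [← norm_sq_val _ hlt]
      simp only [pp_eval]
      exact ((hasSum_cf _ hlt).tendsto_sum_nat.norm).pow 2
  have h1 := hlim.const_mul ((2 * Real.pi)⁻¹)
  simp only [pp_parseval] at h1
  rw [one_div]
  exact tendsto_nhds_unique h1 hs.hasSum.tendsto_sum_nat
end

section
/- For every real r with 0 ≤ r < 1, Σ_{n=0}^{∞} (4^{−n}·C(2n,n))^2 · r^{2n} ≤ 1 + log(1/(1−r^2)), where C(2n,n) is the central binomial coefficient. -/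
theorem aux_bound (n : ℕ) :
    (2 * n + 1 : ℝ) * ((4 : ℝ)⁻¹ ^ n * (Nat.choose (2 * n) n : ℝ)) ^ 2 ≤ 1 := by
  induction n with
  | zero => simp
  | succ n ih =>
    have h : ((n : ℝ) + 1) * (Nat.choose (2 * (n + 1)) (n + 1) : ℝ)
        = 2 * (2 * n + 1) * (Nat.choose (2 * n) n : ℝ) := by
      exact_mod_cast Nat.succ_mul_centralBinom_succ n
    have hn : (0 : ℝ) ≤ n := Nat.cast_nonneg n
    have h2 : (4 : ℝ)⁻¹ ^ (n + 1) * (Nat.choose (2 * (n + 1)) (n + 1) : ℝ)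
        = (2 * n + 1) / (2 * (n + 1)) * ((4 : ℝ)⁻¹ ^ n * (Nat.choose (2 * n) n : ℝ)) := by
      have h3 : (Nat.choose (2 * (n + 1)) (n + 1) : ℝ)
          = 2 * (2 * n + 1) * (Nat.choose (2 * n) n : ℝ) / (n + 1) := by
        rw [← h]; field_simp
      rw [h3, pow_succ]; field_simp; ring
    rw [h2]
    generalize (4 : ℝ)⁻¹ ^ n * (Nat.choose (2 * n) n : ℝ) = a at ih
    push_cast
    have h4 : (2 * ((n : ℝ) + 1) + 1) * ((2 * n + 1) / (2 * (n + 1)) * a) ^ 2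
        = ((2 * n + 3) * (2 * n + 1) / (2 * (n + 1)) ^ 2) * ((2 * n + 1) * a ^ 2) := by
      field_simp; ring
    rw [h4]
    have h5 : (2 * (n : ℝ) + 3) * (2 * n + 1) / (2 * (n + 1)) ^ 2 ≤ 1 := by
      rw [div_le_one (by positivity)]; nlinarith
    exact mul_le_one₀ h5 (by positivity) ih

theorem stmt10 (r : ℝ) (hr0 : 0 ≤ r) (hr1 : r < 1) :
    ∑' n : ℕ, ((4 : ℝ)⁻¹ ^ n * (Nat.choose (2 * n) n : ℝ)) ^ 2 * r ^ (2 * n) ≤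
      1 + Real.log (1 / (1 - r ^ 2)) := by
  have hx : |r ^ 2| < 1 := by
    rw [abs_of_nonneg (by positivity)]; nlinarith
  have hs := Real.hasSum_pow_div_log_of_abs_lt_one hx
  have hle : ∀ n : ℕ, ((4 : ℝ)⁻¹ ^ (n + 1) * (Nat.choose (2 * (n + 1)) (n + 1) : ℝ)) ^ 2
      * r ^ (2 * (n + 1)) ≤ (r ^ 2) ^ (n + 1) / (n + 1) := by
    intro n
    have hb := aux_bound (n + 1)
    generalize (4 : ℝ)⁻¹ ^ (n + 1) * (Nat.choose (2 * (n + 1)) (n + 1) : ℝ) = a at hb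
    push_cast at hb
    rw [pow_mul, le_div_iff₀ (by positivity)]
    have h1 : a ^ 2 * ((n : ℝ) + 1) ≤ 1 := by nlinarith [mul_nonneg (sq_nonneg a) (Nat.cast_nonneg (α := ℝ) n), sq_nonneg a]
    have h2 : 0 ≤ (r ^ 2) ^ (n + 1) := by positivity
    nlinarith [mul_le_mul_of_nonneg_right h1 h2]
  have hsum : Summable fun n : ℕ => ((4 : ℝ)⁻¹ ^ (n + 1) *
      (Nat.choose (2 * (n + 1)) (n + 1) : ℝ)) ^ 2 * r ^ (2 * (n + 1)) :=
    Summable.of_nonneg_of_le (fun n => by positivity) hle hs.summable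
  have hsum' : Summable fun n : ℕ => ((4 : ℝ)⁻¹ ^ n *
      (Nat.choose (2 * n) n : ℝ)) ^ 2 * r ^ (2 * n) :=
    (summable_nat_add_iff 1).mp hsum
  rw [hsum'.tsum_eq_zero_add, one_div, Real.log_inv, ← hs.tsum_eq]
  have := hsum.tsum_le_tsum hle hs.summable
  simpa using this
end
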